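/- arXiv:1606.00272 — 3 statements merged into one kernel-verified Lean document; each statement's English description precedes it below -/
import Mathlib

section
/- Fix n ≥ 3. If the functor St(n,−) satisfies the Tulenbaev lifting property, then it satisfies the dilation principle: for every commutative ring A, every non-nilpotent a ∈ A, and every g ∈ St(n, A[X]) with (ev_{X=0})_*(g) = 1 ∈ St(n,A) and (λ_a)_*(g) = 1 ∈ St(n, A_a[X]), there exists m ≥ 0 such that (ev_{X=a^mY})_*(g) = 1 ∈ St(n, A[Y]), where ev_{X=a^mY} : A[X] → A[Y] is the A-algebra map sending X to a^mY. -/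
open scoped commutatorElement

/-- Generators of the Steinberg group: triples (i,j,r) with i ≠ j. -/
abbrev StGen (n : ℕ) (R : Type) : Type := {p : Fin n × Fin n // p.1 ≠ p.2} × R

/-- The Steinberg relations. -/
inductive StRels (n : ℕ) (R : Type) [CommRing R] : FreeGroup (StGen n R) → Prop
  | add (i j : Fin n) (hij : i ≠ j) (r s : R) :
      StRels n R (FreeGroup.of (⟨(i, j), hij⟩, r) * FreeGroup.of (⟨(i, j), hij⟩, s) *
        (FreeGroup.of (⟨(i, j), hij⟩, r + s))⁻¹)
  | commZero (i j h k : Fin n) (hij : i ≠ j) (hhk : h ≠ k) (hjh : j ≠ h) (hik : i ≠ k) (r s : R) :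
      StRels n R ⁅(FreeGroup.of (⟨(i, j), hij⟩, r) : FreeGroup (StGen n R)), FreeGroup.of (⟨(h, k), hhk⟩, s)⁆
  | commAdd (i j k : Fin n) (hij : i ≠ j) (hjk : j ≠ k) (hik : i ≠ k) (r s : R) :
      StRels n R (⁅(FreeGroup.of (⟨(i, j), hij⟩, r) : FreeGroup (StGen n R)), FreeGroup.of (⟨(j, k), hjk⟩, s)⁆ *
        (FreeGroup.of (⟨(i, k), hik⟩, r * s))⁻¹)

/-- The Steinberg group `St(n, R)`. -/
abbrev SteinbergGroup (n : ℕ) (R : Type) [CommRing R] : Type :=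
  PresentedGroup {w | StRels n R w}

/-- The generator `x_{ij}(r)` of the Steinberg group. -/
def stx (n : ℕ) (R : Type) [CommRing R] (i j : Fin n) (hij : i ≠ j) (r : R) :
    SteinbergGroup n R :=
  PresentedGroup.of (⟨(i, j), hij⟩, r)

/-- The fiber product ring `R ⋉ XR_a[X] = {(r, h) : h(0) = λ_a r}`. -/
def fiberRing (R : Type) [CommRing R] (a : R) :
    Subring (R × Polynomial (Localization.Away a)) where
  carrier := {p | Polynomial.eval 0 p.2 = algebraMap R (Localization.Away a) p.1}
  zero_mem' := by simp
  one_mem' := by simp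
  add_mem' := by
    intro x y hx hy
    simp only [Set.mem_setOf_eq, Prod.snd_add, Polynomial.eval_add, Prod.fst_add, map_add] at *
    rw [hx, hy]
  neg_mem' := by
    intro x hx
    simp only [Set.mem_setOf_eq, Prod.snd_neg, Polynomial.eval_neg, Prod.fst_neg, map_neg] at *
    rw [hx]
  mul_mem' := by
    intro x y hx hy
    simp only [Set.mem_setOf_eq, Prod.snd_mul, Polynomial.eval_mul, Prod.fst_mul, map_mul] at *
    rw [hx, hy]

/-- The Tulenbaev lifting property for the functor `St(n, -)`. -/
def TulenbaevLifting (n : ℕ) : Prop :=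
  ∀ (R : Type) [CommRing R] (a : R), ¬ IsNilpotent a →
  ∀ (pSt : SteinbergGroup n (fiberRing R a) →* SteinbergGroup n R),
    (∀ (i j : Fin n) (hij : i ≠ j) (x : fiberRing R a),
      pSt (stx n (fiberRing R a) i j hij x) = stx n R i j hij x.val.1) →
  ∀ (μSt : SteinbergGroup n (fiberRing R a) →*
      SteinbergGroup n (Polynomial (Localization.Away a))),
    (∀ (i j : Fin n) (hij : i ≠ j) (x : fiberRing R a),
      μSt (stx n (fiberRing R a) i j hij x) =
        stx n (Polynomial (Localization.Away a)) i j hij x.val.2) →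
  ∀ (ev0 : SteinbergGroup n (Polynomial (Localization.Away a)) →*
      SteinbergGroup n (Localization.Away a)),
    (∀ (i j : Fin n) (hij : i ≠ j) (p : Polynomial (Localization.Away a)),
      ev0 (stx n (Polynomial (Localization.Away a)) i j hij p) =
        stx n (Localization.Away a) i j hij (Polynomial.eval 0 p)) →
  ∃ T : ev0.ker →* SteinbergGroup n (fiberRing R a),
    (∀ g : ev0.ker, μSt (T g) = (g : SteinbergGroup n (Polynomial (Localization.Away a)))) ∧
    (∀ h : SteinbergGroup n (fiberRing R a), pSt h = 1 →
      ∀ hm : μSt h ∈ ev0.ker, T ⟨μSt h, hm⟩ = h)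

/-- The dilation principle for the functor `St(n, -)`. -/
def DilationPrinciple (n : ℕ) : Prop :=
  ∀ (A : Type) [CommRing A] (a : A), ¬ IsNilpotent a →
  ∀ g : SteinbergGroup n (Polynomial A),
  ∀ (ev0 : SteinbergGroup n (Polynomial A) →* SteinbergGroup n A),
    (∀ (i j : Fin n) (hij : i ≠ j) (p : Polynomial A),
      ev0 (stx n (Polynomial A) i j hij p) = stx n A i j hij (Polynomial.eval 0 p)) →
    ev0 g = 1 →
  ∀ (la : SteinbergGroup n (Polynomial A) →*
      SteinbergGroup n (Polynomial (Localization.Away a))),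
    (∀ (i j : Fin n) (hij : i ≠ j) (p : Polynomial A),
      la (stx n (Polynomial A) i j hij p) =
        stx n (Polynomial (Localization.Away a)) i j hij
          (p.map (algebraMap A (Localization.Away a)))) →
    la g = 1 →
  ∃ m : ℕ, ∀ (ev : SteinbergGroup n (Polynomial A) →* SteinbergGroup n (Polynomial A)),
    (∀ (i j : Fin n) (hij : i ≠ j) (p : Polynomial A),
      ev (stx n (Polynomial A) i j hij p) =
        stx n (Polynomial A) i j hij (p.comp (Polynomial.C (a ^ m) * Polynomial.X))) →
    ev g = 1

section Helpers

open Polynomial Filter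

theorem st_ext {n : ℕ} {R : Type} [CommRing R] {H : Type} [Group H]
    {f g : SteinbergGroup n R →* H}
    (h : ∀ i j hij r, f (stx n R i j hij r) = g (stx n R i j hij r)) : f = g := by
  apply PresentedGroup.ext
  rintro ⟨⟨⟨i, j⟩, hij⟩, r⟩
  exact h i j hij r

theorem stx_add (n : ℕ) (R : Type) [CommRing R] (i j : Fin n) (hij : i ≠ j) (r s : R) :
    stx n R i j hij r * stx n R i j hij s = stx n R i j hij (r + s) := by
  have := PresentedGroup.one_of_mem (rels := {w | StRels n R w}) (StRels.add i j hij r s)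
  rw [map_mul, map_mul, map_inv, mul_inv_eq_one] at this
  exact this

theorem stx_comm (n : ℕ) (R : Type) [CommRing R] (i j h k : Fin n) (hij : i ≠ j) (hhk : h ≠ k)
    (hjh : j ≠ h) (hik : i ≠ k) (r s : R) :
    ⁅stx n R i j hij r, stx n R h k hhk s⁆ = 1 := by
  have := PresentedGroup.one_of_mem (rels := {w | StRels n R w})
    (StRels.commZero i j h k hij hhk hjh hik r s)
  rw [map_commutatorElement] at this
  exact this

theorem stx_commAdd (n : ℕ) (R : Type) [CommRing R] (i j k : Fin n) (hij : i ≠ j) (hjk : j ≠ k)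
    (hik : i ≠ k) (r s : R) :
    ⁅stx n R i j hij r, stx n R j k hjk s⁆ = stx n R i k hik (r * s) := by
  have := PresentedGroup.one_of_mem (rels := {w | StRels n R w})
    (StRels.commAdd i j k hij hjk hik r s)
  rw [map_mul, map_inv, mul_inv_eq_one, map_commutatorElement] at this
  exact this

theorem st_lift {n : ℕ} {R : Type} [CommRing R] {H : Type} [Group H]
    (f : ∀ i j : Fin n, i ≠ j → R → H)
    (h1 : ∀ i j hij r s, f i j hij r * f i j hij s = f i j hij (r + s))
    (h2 : ∀ i j h k hij hhk, j ≠ h → i ≠ k → ∀ r s, ⁅f i j hij r, f h k hhk s⁆ = 1)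
    (h3 : ∀ i j k hij hjk hik r s, ⁅f i j hij r, f j k hjk s⁆ = f i k hik (r * s)) :
    ∃ F : SteinbergGroup n R →* H, ∀ i j hij r, F (stx n R i j hij r) = f i j hij r := by
  have key : ∀ w ∈ {w | StRels n R w},
      FreeGroup.lift (fun x : StGen n R => f x.1.1.1 x.1.1.2 x.1.2 x.2) w = 1 := by
    rintro w (⟨i, j, hij, r, s⟩ | ⟨i, j, h, k, hij, hhk, hjh, hik, r, s⟩ |
      ⟨i, j, k, hij, hjk, hik, r, s⟩)
    · simp [h1]
    · rw [map_commutatorElement]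
      simpa using h2 i j h k hij hhk hjh hik r s
    · rw [map_mul, map_inv, map_commutatorElement, mul_inv_eq_one]
      simpa using h3 i j k hij hjk hik r s
  exact ⟨PresentedGroup.toGroup key, fun i j hij r => PresentedGroup.toGroup.of key⟩

theorem st_map (n : ℕ) {R S : Type} [CommRing R] [CommRing S] (φ : R →+* S) :
    ∃ F : SteinbergGroup n R →* SteinbergGroup n S,
      ∀ i j hij r, F (stx n R i j hij r) = stx n S i j hij (φ r) := by
  apply st_lift (fun i j hij r => stx n S i j hij (φ r))
  · intros; rw [stx_add, map_add]
  · intros; apply stx_comm <;> assumption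
  · intros; rw [stx_commAdd, map_mul]

theorem st_germ (n : ℕ) (R : Type) [CommRing R] :
    ∃ F : SteinbergGroup n (Germ (atTop : Filter ℕ) R) →* Germ (atTop : Filter ℕ) (SteinbergGroup n R),
      ∀ i j hij r, F (stx n _ i j hij r) = Germ.map (stx n R i j hij) r := by
  apply st_lift (fun i j hij r => Germ.map (stx n R i j hij) r)
  · intro i j hij r s
    induction r using Germ.inductionOn with | _ r
    induction s using Germ.inductionOn with | _ s
    change Germ.ofFun (l := (atTop : Filter ℕ)) (fun m => stx n R i j hij (r m) * stx n R i j hij (s m))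
      = Germ.ofFun (l := (atTop : Filter ℕ)) (fun m => stx n R i j hij (r m + s m))
    simp only [stx_add]
  · intro i j h k hij hhk hjh hik r s
    induction r using Germ.inductionOn with | _ r
    induction s using Germ.inductionOn with | _ s
    change Germ.ofFun (l := (atTop : Filter ℕ)) (fun m => ⁅stx n R i j hij (r m), stx n R h k hhk (s m)⁆)
      = Germ.ofFun (l := (atTop : Filter ℕ)) (fun m => (1 : SteinbergGroup n R))
    simp only [stx_comm n R i j h k hij hhk hjh hik]
  · intro i j k hij hjk hik r s
    induction r using Germ.inductionOn with | _ r
    induction s using Germ.inductionOn with | _ s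
    change Germ.ofFun (l := (atTop : Filter ℕ)) (fun m => ⁅stx n R i j hij (r m), stx n R j k hjk (s m)⁆)
      = Germ.ofFun (l := (atTop : Filter ℕ)) (fun m => stx n R i k hik (r m * s m))
    simp only [stx_commAdd n R i j k hij hjk hik]

/-- compatible sequences representing an element of the fiber ring -/
def FRel {A : Type} [CommRing A] (a : A) (b : fiberRing A a) (s : ℕ → A[X]) : Prop :=
  ∀ᶠ m in atTop, eval 0 (s m) = b.val.1 ∧
    (s m).map (algebraMap A (Localization.Away a)) =
      b.val.2.comp (C (algebraMap A (Localization.Away a) (a ^ m)) * X) ∧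
    s (m + 1) = (s m).comp (C a * X)

theorem comp_scale {A : Type} [CommRing A] (p : A[X]) (b c : A) :
    (p.comp (C b * X)).comp (C c * X) = p.comp (C (b * c) * X) := by
  ext k
  simp only [comp_C_mul_X_coeff]
  ring

theorem FRel_exists {A : Type} [CommRing A] (a : A) (b : fiberRing A a) : ∃ s, FRel a b s := by
  obtain ⟨⟨r, h⟩, hb⟩ := b
  change eval 0 h = algebraMap A (Localization.Away a) r at hb
  obtain ⟨c, ⟨N, rfl⟩, hc⟩ := IsLocalization.integerNormalization_spec (Submonoid.powers a) h.divX
  set q := IsLocalization.integerNormalization (Submonoid.powers a) h.divX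
  have hh : h = X * h.divX + C (algebraMap A (Localization.Away a) r) := by
    rw [← hb, ← coeff_zero_eq_eval_zero, X_mul_divX_add]
  refine ⟨fun m => X * C (a ^ (m - N)) * q.comp (C (a ^ m) * X) + C r, ?_⟩
  filter_upwards [eventually_ge_atTop N] with m hm
  obtain ⟨k, rfl⟩ := Nat.exists_eq_add_of_le hm
  refine ⟨by simp, ?_, ?_⟩
  · rw [hh]
    simp only [Polynomial.map_add, Polynomial.map_mul, map_X, map_C, Polynomial.map_comp, hc,
      add_comp, mul_comp, X_comp, C_comp]
    rw [Algebra.smul_def]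
    simp only [mul_comp, Polynomial.algebraMap_apply, pow_comp, C_comp, map_pow, Nat.add_sub_cancel_left]
    ring
  · simp only [add_comp, mul_comp, X_comp, C_comp, comp_scale, ← pow_succ]
    rw [show N + k + 1 - N = (N + k - N) + 1 by omega, pow_succ, map_mul]
    ring

theorem FRel_unique {A : Type} [CommRing A] (a : A) (b : fiberRing A a) {s t : ℕ → A[X]}
    (hs : FRel a b s) (ht : FRel a b t) : s =ᶠ[atTop] t := by
  obtain ⟨M, hM⟩ := eventually_atTop.1 (hs.and ht)
  have h0 : ∀ m ≥ M, (s m - t m).coeff 0 = 0 := by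
    intro m hm
    obtain ⟨h1, h2⟩ := hM m hm
    rw [coeff_zero_eq_eval_zero, eval_sub, h1.1, h2.1, sub_self]
  have h1 : ∀ k, s (M + k) - t (M + k) = (s M - t M).comp (C (a ^ k) * X) := by
    intro k
    induction k with
    | zero => simp
    | succ k ih =>
      obtain ⟨h1, h2⟩ := hM (M + k) (by omega)
      rw [← add_assoc, h1.2.2, h2.2.2, ← sub_comp, ih, comp_scale, pow_succ]
  have h2 : (s M - t M).map (algebraMap A (Localization.Away a)) = 0 := by
    obtain ⟨h1, h2⟩ := hM M le_rfl
    rw [Polynomial.map_sub, h1.2.1, h2.2.1, sub_self]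
  have h3 : ∀ i, ∃ k, a ^ k * (s M - t M).coeff i = 0 := by
    intro i
    have := congrArg (fun p => p.coeff i) h2
    simp only [coeff_map, coeff_zero] at this
    obtain ⟨⟨_, k, rfl⟩, hk⟩ :=
      (IsLocalization.map_eq_zero_iff (Submonoid.powers a) (Localization.Away a) _).1 this
    exact ⟨k, hk⟩
  choose κ hκ using h3
  set K := (s M - t M).support.sup κ
  filter_upwards [eventually_ge_atTop (M + K)] with m hm
  obtain ⟨k, rfl⟩ := Nat.exists_eq_add_of_le hm
  rw [← sub_eq_zero, add_assoc, h1]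
  ext i
  rw [comp_C_mul_X_coeff, coeff_zero]
  by_cases hi : i ∈ (s M - t M).support
  · have hle : κ i ≤ K := Finset.le_sup (f := κ) hi
    rcases Nat.eq_zero_or_pos i with rfl | hpos
    · rw [h0 M le_rfl, zero_mul]
    · obtain ⟨e, he⟩ : a ^ κ i ∣ (a ^ (K + k)) ^ i := by
        rw [← pow_mul]
        apply pow_dvd_pow
        nlinarith
      rw [he, ← mul_assoc, mul_comm _ (a ^ κ i), hκ, zero_mul]
  · rw [notMem_support_iff.1 hi, zero_mul]

theorem rho_exists {A : Type} [CommRing A] (a : A) :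
    ∃ ρ : fiberRing A a →+* Germ (atTop : Filter ℕ) A[X],
      ∀ b s, FRel a b s → ρ b = (s : Germ atTop A[X]) := by
  choose σ hσ using FRel_exists a
  have key : ∀ b s, FRel a b s → Germ.ofFun (l := (atTop : Filter ℕ)) (σ b) = Germ.ofFun s :=
    fun b s hs => Germ.coe_eq.2 (FRel_unique a b (hσ b) hs)
  refine ⟨{ toFun := fun b => Germ.ofFun (σ b)
            map_one' := ?_, map_zero' := ?_, map_add' := ?_, map_mul' := ?_ }, key⟩
  · exact key 1 (fun _ => 1) (Eventually.of_forall fun m => by simp)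
  · intro x y
    refine key (x * y) (fun m => σ x m * σ y m) ?_
    filter_upwards [hσ x, hσ y] with m h1 h2
    simp [h1, h2]
  · exact key 0 (fun _ => 0) (Eventually.of_forall fun m => by simp)
  · intro x y
    refine key (x + y) (fun m => σ x m + σ y m) ?_
    filter_upwards [hσ x, hσ y] with m h1 h2
    simp [h1, h2]

/-- the map `A[X] → A ⋉ X A_a[X]` -/
noncomputable def thetaHom {A : Type} [CommRing A] (a : A) : A[X] →+* fiberRing A a :=
  RingHom.codRestrict ((evalRingHom 0).prod (mapRingHom (algebraMap A (Localization.Away a))))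
    (fiberRing A a) (fun p => by
      change eval 0 (p.map _) = algebraMap _ _ (eval 0 p)
      rw [← coeff_zero_eq_eval_zero, ← coeff_zero_eq_eval_zero, coeff_map])

end Helpers

open Polynomial Filter in
theorem st_colim {n : ℕ} {A : Type} [CommRing A] (a : A)
    (θ : SteinbergGroup n A[X] →* SteinbergGroup n (fiberRing A a))
    (hθ : ∀ i j hij p, θ (stx n _ i j hij p) = stx n _ i j hij (thetaHom a p))
    (g : SteinbergGroup n A[X]) (hg : θ g = 1) :
    ∃ m : ℕ, ∀ (ev : SteinbergGroup n A[X] →* SteinbergGroup n A[X]),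
      (∀ (i j : Fin n) (hij : i ≠ j) (p : A[X]), ev (stx n A[X] i j hij p) =
        stx n A[X] i j hij (p.comp (C (a ^ m) * X))) → ev g = 1 := by
  obtain ⟨ρ, hρ⟩ := rho_exists a
  obtain ⟨ρs, hρs⟩ := st_map n ρ
  obtain ⟨γ, hγ⟩ := st_germ n A[X]
  choose E hE using fun m : ℕ => st_map n (compRingHom (C (a ^ m) * X : A[X]))
  have key : (γ.comp ρs).comp θ =
      (Germ.coeMulHom (atTop : Filter ℕ)).comp (MonoidHom.pi E) := by
    apply st_ext
    intro i j hij p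
    simp only [MonoidHom.comp_apply, hθ, hρs, hγ]
    rw [hρ (thetaHom a p) (fun m => p.comp (C (a ^ m) * X))]
    · change Germ.ofFun (l := (atTop : Filter ℕ)) (fun m => stx n A[X] i j hij (p.comp (C (a ^ m) * X))) =
        Germ.ofFun (l := (atTop : Filter ℕ)) (fun m => E m (stx n A[X] i j hij p))
      simp only [hE, coe_compRingHom_apply]
    · refine Eventually.of_forall fun m => ⟨?_, ?_, ?_⟩
      · change _ = eval 0 p
        simp [eval_comp]
      · change _ = (p.map _).comp _
        simp [Polynomial.map_comp]
      · simp only [comp_scale, pow_succ]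
  have h1 := DFunLike.congr_fun key g
  simp only [MonoidHom.comp_apply, hg, map_one] at h1
  have h2 : (fun m : ℕ => (1 : SteinbergGroup n A[X])) =ᶠ[atTop] fun m => E m g :=
    Germ.coe_eq.1 h1
  obtain ⟨m, hm⟩ := h2.exists
  refine ⟨m, fun ev hev => ?_⟩
  have : ev = E m := st_ext fun i j hij p => by rw [hev, hE]; rfl
  rw [this]
  exact hm.symm

theorem stmt2 (n : ℕ) (hn : 3 ≤ n) (h : TulenbaevLifting n) : DilationPrinciple n := by
  intro A _ a ha g ev0 hev0 hg0 la hla hgl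
  obtain ⟨pSt, hp⟩ := st_map n ((RingHom.fst A (Polynomial (Localization.Away a))).comp
    (fiberRing A a).subtype)
  obtain ⟨μSt, hμ⟩ := st_map n ((RingHom.snd A (Polynomial (Localization.Away a))).comp
    (fiberRing A a).subtype)
  obtain ⟨e0, he⟩ := st_map n (Polynomial.evalRingHom (0 : Localization.Away a))
  obtain ⟨T, -, hT⟩ := h A a ha pSt hp μSt hμ e0 he
  obtain ⟨θ, hθ⟩ := st_map n (thetaHom a)
  have h1 : pSt.comp θ = ev0 := st_ext fun i j hij p => by
    rw [MonoidHom.comp_apply, hθ, hp, hev0]; rfl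
  have h2 : μSt.comp θ = la := st_ext fun i j hij p => by
    rw [MonoidHom.comp_apply, hθ, hμ, hla]; rfl
  have h3 : pSt (θ g) = 1 := by rw [← MonoidHom.comp_apply, h1, hg0]
  have h4 : μSt (θ g) = 1 := by rw [← MonoidHom.comp_apply, h2, hgl]
  have hm : μSt (θ g) ∈ e0.ker := by rw [h4]; exact one_mem _
  have h5 := hT (θ g) h3 hm
  have h6 : (⟨μSt (θ g), hm⟩ : e0.ker) = 1 := Subtype.ext h4
  rw [h6, map_one] at h5
  exact st_colim a θ hθ g h5.symm
end

section
/- Fix n ≥ 3. If the functor St(n,−) satisfies the dilation principle (for every commutative ring A, every non-nilpotent a ∈ A and every g ∈ St(n,A[X]) with (ev_{X=0})_*(g) = 1 and (λ_a)_*(g) = 1 ∈ St(n,A_a[X]), there exists m ≥ 0 with (ev_{X=a^mY})_*(g) = 1 ∈ St(n,A[Y])), then St(n,−) satisfies the local–global principle: for every commutative ring R and every g ∈ St(n,R[X]) with (ev_{X=0})_*(g) = 1 ∈ St(n,R), g = 1 if and only if (λ_M)_*(g) = 1 ∈ St(n,R_M[X]) for all maximal ideals M of R. -/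
open scoped commutatorElement

/-- The Quillen local-global principle for the functor `St(n, -)`. -/
def LocalGlobalPrinciple (n : ℕ) : Prop :=
  ∀ (R : Type) [CommRing R] (g : SteinbergGroup n (Polynomial R))
    (ev0 : SteinbergGroup n (Polynomial R) →* SteinbergGroup n R),
    (∀ (i j : Fin n) (hij : i ≠ j) (p : Polynomial R),
      ev0 (stx n (Polynomial R) i j hij p) = stx n R i j hij (Polynomial.eval 0 p)) →
    ev0 g = 1 →
    (g = 1 ↔
      ∀ (M : Ideal R) [M.IsMaximal]
        (lM : SteinbergGroup n (Polynomial R) →*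
          SteinbergGroup n (Polynomial (Localization.AtPrime M))),
        (∀ (i j : Fin n) (hij : i ≠ j) (p : Polynomial R),
          lM (stx n (Polynomial R) i j hij p) =
            stx n (Polynomial (Localization.AtPrime M)) i j hij
              (p.map (algebraMap R (Localization.AtPrime M)))) →
        lM g = 1)

namespace StLG

theorem stx_add (n : ℕ) (R : Type) [CommRing R] (i j : Fin n) (hij : i ≠ j) (r s : R) :
    stx n R i j hij r * stx n R i j hij s = stx n R i j hij (r + s) := by
  have h := PresentedGroup.one_of_mem (rels := {w | StRels n R w}) (StRels.add i j hij r s)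
  rw [map_mul, map_mul, map_inv] at h
  exact mul_inv_eq_one.mp h

theorem stx_comm (n : ℕ) (R : Type) [CommRing R] (i j h k : Fin n) (hij : i ≠ j) (hhk : h ≠ k)
    (hjh : j ≠ h) (hik : i ≠ k) (r s : R) :
    ⁅stx n R i j hij r, stx n R h k hhk s⁆ = 1 := by
  have h := PresentedGroup.one_of_mem (rels := {w | StRels n R w})
    (StRels.commZero i j h k hij hhk hjh hik r s)
  rw [map_commutatorElement] at h
  exact h

theorem stx_commAdd (n : ℕ) (R : Type) [CommRing R] (i j k : Fin n) (hij : i ≠ j) (hjk : j ≠ k)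
    (hik : i ≠ k) (r s : R) :
    ⁅stx n R i j hij r, stx n R j k hjk s⁆ = stx n R i k hik (r * s) := by
  have h := PresentedGroup.one_of_mem (rels := {w | StRels n R w})
    (StRels.commAdd i j k hij hjk hik r s)
  rw [map_mul, map_commutatorElement, map_inv] at h
  exact mul_inv_eq_one.mp h

theorem exists_lift (n : ℕ) (R : Type) [CommRing R] {G : Type} [Group G]
    (F : ∀ i j : Fin n, i ≠ j → R → G)
    (h1 : ∀ i j hij r s, F i j hij r * F i j hij s = F i j hij (r + s))
    (h2 : ∀ i j h k hij hhk, j ≠ h → i ≠ k → ∀ r s, ⁅F i j hij r, F h k hhk s⁆ = 1)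
    (h3 : ∀ i j k hij hjk hik r s, ⁅F i j hij r, F j k hjk s⁆ = F i k hik (r * s)) :
    ∃ φ : SteinbergGroup n R →* G, ∀ i j hij r, φ (stx n R i j hij r) = F i j hij r := by
  refine ⟨PresentedGroup.toGroup (f := fun p : StGen n R => F p.1.1.1 p.1.1.2 p.1.2 p.2) ?_, ?_⟩
  · rintro w hw
    cases hw with
    | add i j hij r s => simp [h1]
    | commZero i j h k hij hhk hjh hik r s =>
      rw [map_commutatorElement]
      simpa using h2 i j h k hij hhk hjh hik r s
    | commAdd i j k hij hjk hik r s =>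
      rw [map_mul, map_commutatorElement, map_inv, mul_inv_eq_one]
      simpa using h3 i j k hij hjk hik r s
  · intro i j hij r
    exact PresentedGroup.toGroup.of _

theorem hom_ext {n : ℕ} {R : Type} [CommRing R] {G : Type} [Group G]
    {φ ψ : SteinbergGroup n R →* G}
    (h : ∀ i j hij r, φ (stx n R i j hij r) = ψ (stx n R i j hij r)) : φ = ψ :=
  PresentedGroup.ext fun ⟨⟨⟨i, j⟩, hij⟩, r⟩ => h i j hij r

theorem exists_map (n : ℕ) {R S : Type} [CommRing R] [CommRing S] (f : R →+* S) :
    ∃ φ : SteinbergGroup n R →* SteinbergGroup n S,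
      ∀ i j hij r, φ (stx n R i j hij r) = stx n S i j hij (f r) := by
  apply exists_lift n R (fun i j hij r => stx n S i j hij (f r))
  · intros; rw [stx_add, map_add]
  · intros; apply stx_comm <;> assumption
  · intros; rw [map_mul, stx_commAdd]

noncomputable def stMap (n : ℕ) {R S : Type} [CommRing R] [CommRing S] (f : R →+* S) :
    SteinbergGroup n R →* SteinbergGroup n S := (exists_map n f).choose

theorem stMap_stx {n : ℕ} {R S : Type} [CommRing R] [CommRing S] (f : R →+* S) (i j hij r) :
    stMap n f (stx n R i j hij r) = stx n S i j hij (f r) :=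
  (exists_map n f).choose_spec i j hij r

theorem eq_stMap {n : ℕ} {R S : Type} [CommRing R] [CommRing S] (f : R →+* S)
    (φ : SteinbergGroup n R →* SteinbergGroup n S)
    (h : ∀ i j hij r, φ (stx n R i j hij r) = stx n S i j hij (f r)) : φ = stMap n f :=
  hom_ext fun i j hij r => by rw [h, stMap_stx]

theorem stMap_stMap {n : ℕ} {R S T : Type} [CommRing R] [CommRing S] [CommRing T]
    (f : R →+* S) (g : S →+* T) (x : SteinbergGroup n R) :
    stMap n g (stMap n f x) = stMap n (g.comp f) x := by
  have : (stMap n g).comp (stMap n f) = stMap n (g.comp f) :=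
    eq_stMap _ _ fun i j hij r => by simp [stMap_stx]
  exact DFunLike.congr_fun this x

theorem stMap_id {n : ℕ} {R : Type} [CommRing R] (x : SteinbergGroup n R) :
    stMap n (RingHom.id R) x = x := by
  have : MonoidHom.id _ = stMap n (RingHom.id R) :=
    eq_stMap _ _ fun i j hij r => by simp
  exact (DFunLike.congr_fun this x).symm

/-- ideal of eventually zero families -/
def evIdeal {ι : Type} (F : Filter ι) (S : ι → Type) [∀ i, CommRing (S i)] :
    Ideal (∀ i, S i) where
  carrier := {f | ∀ᶠ i in F, f i = 0}
  add_mem' := by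
    intro a b ha hb
    filter_upwards [ha, hb] with i h1 h2
    simp [h1, h2]
  zero_mem' := Filter.Eventually.of_forall fun _ => rfl
  smul_mem' := by
    intro c x hx
    filter_upwards [hx] with i h1
    simp [h1]

/-- subgroup of eventually trivial families -/
def evSub {ι : Type} (F : Filter ι) (S : ι → Type) [∀ i, Group (S i)] :
    Subgroup (∀ i, S i) where
  carrier := {f | ∀ᶠ i in F, f i = 1}
  mul_mem' := by
    intro a b ha hb
    filter_upwards [ha, hb] with i h1 h2
    simp [h1, h2]
  one_mem' := Filter.Eventually.of_forall fun _ => rfl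
  inv_mem' := by
    intro x hx
    filter_upwards [hx] with i h1
    simp [h1]

instance {ι : Type} (F : Filter ι) (S : ι → Type) [∀ i, Group (S i)] : (evSub F S).Normal where
  conj_mem := by
    intro x hx g
    filter_upwards [hx] with i h1
    simp [h1]

theorem mkI_eq {ι : Type} (F : Filter ι) (S : ι → Type) [∀ i, CommRing (S i)]
    (f g : ∀ i, S i) : Ideal.Quotient.mk (evIdeal F S) f = Ideal.Quotient.mk (evIdeal F S) g ↔
      ∀ᶠ i in F, f i = g i := by
  rw [Ideal.Quotient.mk_eq_mk_iff_sub_mem]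
  change (∀ᶠ i in F, f i - g i = 0) ↔ _
  simp only [sub_eq_zero]

theorem isUnit_mkI {ι : Type} (F : Filter ι) (S : ι → Type) [∀ i, CommRing (S i)]
    (f : ∀ i, S i) (h : ∀ᶠ i in F, IsUnit (f i)) :
    IsUnit (Ideal.Quotient.mk (evIdeal F S) f) := by
  refine IsUnit.of_mul_eq_one (Ideal.Quotient.mk _ (fun c => Ring.inverse (f c))) ?_
  rw [← map_mul, ← map_one (Ideal.Quotient.mk _), mkI_eq]
  filter_upwards [h] with i hi
  exact Ring.mul_inverse_cancel _ hi

theorem exists_ext {A T B : Type} [CommRing A] [CommRing T] [CommRing B] (N : Submonoid A)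
    (ψ : A →+* T) (h : letI := ψ.toAlgebra; IsLocalization N T) (μ : A →+* B)
    (hμ : ∀ y : N, IsUnit (μ y)) : ∃ l : T →+* B, ∀ a, l (ψ a) = μ a := by
  letI := ψ.toAlgebra
  exact ⟨IsLocalization.lift (M := N) hμ, fun a => IsLocalization.lift_eq hμ a⟩

theorem mkG_eq {ι : Type} (F : Filter ι) (S : ι → Type) [∀ i, Group (S i)]
    (f g : ∀ i, S i) : QuotientGroup.mk' (evSub F S) f = QuotientGroup.mk' (evSub F S) g ↔
      ∀ᶠ i in F, f i = g i := by
  rw [QuotientGroup.mk'_apply, QuotientGroup.mk'_apply, QuotientGroup.eq]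
  change (∀ᶠ i in F, (f i)⁻¹ * g i = 1) ↔ _
  simp only [inv_mul_eq_one]

theorem eventually_one {n : ℕ} {ι : Type} (F : Filter ι) (S : ι → Type) [∀ i, CommRing (S i)]
    {A T : Type} [CommRing A] [CommRing T] (φ : ∀ i, A →+* S i) (ψ : A →+* T)
    (l : T →+* (∀ i, S i) ⧸ evIdeal F S)
    (hl : ∀ a, l (ψ a) = Ideal.Quotient.mk _ (fun i => φ i a))
    (g : SteinbergGroup n A) (hg : stMap n ψ g = 1) : ∀ᶠ i in F, stMap n (φ i) g = 1 := by
  choose rep hrep using fun t => Ideal.Quotient.mk_surjective (l t)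
  have hadd : ∀ r s, ∀ᶠ i in F, rep r i + rep s i = rep (r + s) i := fun r s =>
    (mkI_eq F S (rep r + rep s) (rep (r + s))).1 (by rw [map_add, hrep, hrep, hrep, map_add])
  have hmul : ∀ r s, ∀ᶠ i in F, rep r i * rep s i = rep (r * s) i := fun r s =>
    (mkI_eq F S (rep r * rep s) (rep (r * s))).1 (by rw [map_mul, hrep, hrep, hrep, map_mul])
  have hφ : ∀ a, ∀ᶠ i in F, rep (ψ a) i = φ i a := fun a =>
    (mkI_eq F S (rep (ψ a)) (fun i => φ i a)).1 (by rw [hrep, hl])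
  let q := QuotientGroup.mk' (evSub F (fun i => SteinbergGroup n (S i)))
  obtain ⟨Φ, hΦ⟩ := exists_lift n T
    (fun i j hij t => q (fun k => stx n (S k) i j hij (rep t k))) (by
      intro i j hij r s
      rw [← map_mul, mkG_eq]
      filter_upwards [hadd r s] with k hk
      rw [← hk, ← stx_add]; rfl) (by
      intro i j h k hij hhk hjh hik r s
      rw [← map_commutatorElement, ← map_one q, mkG_eq]
      filter_upwards with c
      exact stx_comm _ _ _ _ _ _ _ _ hjh hik _ _) (by
      intro i j k hij hjk hik r s
      rw [← map_commutatorElement, mkG_eq]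
      filter_upwards [hmul r s] with c hc
      rw [← hc]
      exact stx_commAdd _ _ _ _ _ _ _ _ _ _)
  have key : Φ.comp (stMap n ψ) = q.comp (MonoidHom.mk' (fun x i => stMap n (φ i) x)
      (by intro a b; funext i; simp)) := by
    apply hom_ext
    intro i j hij r
    rw [MonoidHom.comp_apply, stMap_stx, hΦ, MonoidHom.comp_apply, mkG_eq]
    filter_upwards [hφ r] with k hk
    rw [hk]
    exact (stMap_stx _ _ _ _ _).symm
  have := DFunLike.congr_fun key g
  rw [MonoidHom.comp_apply, hg, map_one, ← map_one q, MonoidHom.comp_apply, mkG_eq] at this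
  filter_upwards [this] with i hi
  exact hi.symm

open Polynomial in
theorem exists_away {n : ℕ} {R : Type} [CommRing R] (M : Ideal R) [M.IsMaximal]
    (g : SteinbergGroup n R[X])
    (hg : stMap n (mapRingHom (algebraMap R (Localization.AtPrime M))) g = 1) :
    ∃ a, a ∉ M ∧ stMap n (mapRingHom (algebraMap R (Localization.Away a))) g = 1 := by
  let F : Filter M.primeCompl :=
    { sets := {U | ∃ s : M.primeCompl, ∀ c : M.primeCompl, (s : R) ∣ c → c ∈ U}
      univ_sets := ⟨1, fun _ _ => trivial⟩
      sets_of_superset := by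
        rintro U V ⟨s, hs⟩ h
        exact ⟨s, fun c hc => h (hs c hc)⟩
      inter_sets := by
        rintro U V ⟨s, hs⟩ ⟨t, ht⟩
        refine ⟨s * t, fun c hc => ⟨hs c ?_, ht c ?_⟩⟩
        · exact (Dvd.intro _ rfl).trans hc
        · exact (Dvd.intro_left _ rfl).trans hc }
  have hF : ∀ P : M.primeCompl → Prop, (∀ᶠ c in F, P c) ↔
    ∃ s : M.primeCompl, ∀ c : M.primeCompl, (s : R) ∣ c → P c := fun P => Iff.rfl
  let S : M.primeCompl → Type := fun c => (Localization.Away (c : R))[X]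
  letI iS : ∀ c, CommRing (S c) := fun c =>
    inferInstanceAs (CommRing (Localization.Away (c : R))[X])
  let φ : ∀ c : M.primeCompl, R[X] →+* S c := fun c =>
    mapRingHom (algebraMap R (Localization.Away (c : R)))
  let ψ : R[X] →+* (Localization.AtPrime M)[X] := mapRingHom (algebraMap R _)
  let μ : R[X] →+* (∀ i, S i) ⧸ evIdeal F S := (Ideal.Quotient.mk _).comp (RingHom.pi φ)
  have hμ : ∀ y : (M.primeCompl).map (C : R →+* R[X]), IsUnit (μ y) := by
    rintro ⟨_, s, hs, rfl⟩
    refine isUnit_mkI F S _ ((hF _).2 ⟨⟨s, hs⟩, fun c hc => ?_⟩)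
    have hu : IsUnit (φ c (C s)) := by
      have : IsUnit (algebraMap R (Localization.Away (c : R)) s) :=
        isUnit_of_dvd_unit (map_dvd _ hc) (IsLocalization.Away.algebraMap_isUnit (c : R))
      have h2 := this.map (C : _ →+* (Localization.Away (c : R))[X])
      rw [← Polynomial.map_C] at h2
      exact h2
    exact hu
  obtain ⟨l, hl⟩ := exists_ext ((M.primeCompl).map (C : R →+* R[X])) ψ
    (Polynomial.isLocalization M.primeCompl (Localization.AtPrime M)) μ hμ
  have := eventually_one F S φ ψ l hl g hg
  obtain ⟨s, hs⟩ := (hF _).1 this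
  exact ⟨s, s.2, hs s dvd_rfl⟩

open Polynomial in
/-- The substitution `X ↦ X + b Y`. -/
noncomputable def τ {R : Type} [CommRing R] (b : R) : R[X] →+* R[X][X] :=
  eval₂RingHom (C.comp C) (C X + C (C b) * X)

open Polynomial in
def dilIdeal {n : ℕ} {R : Type} [CommRing R] (g : SteinbergGroup n R[X]) : Ideal R where
  carrier := {b | stMap n (τ b) g = stMap n C g}
  zero_mem' := by
    have : τ (0 : R) = C := by apply ringHom_ext <;> simp [τ]
    simp [this]
  add_mem' := by
    intro b c hb hc
    have hb' : stMap n (τ b) g = stMap n C g := hb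
    have hc' : stMap n (τ c) g = stMap n C g := hc
    change stMap n (τ (b + c)) g = stMap n C g
    have h := congrArg (stMap n (eval₂RingHom (τ b) X)) hc'
    rw [stMap_stMap, stMap_stMap] at h
    have e1 : (eval₂RingHom (τ b) X).comp (τ c) = τ (b + c) := by
      apply ringHom_ext
      · intro a; simp [τ]
      · simp [τ]; ring
    have e2 : (eval₂RingHom (τ b) X).comp C = τ b := by
      apply ringHom_ext <;> simp [τ]
    rw [e1, e2] at h
    rw [h, hb']
  smul_mem' := by
    intro r b hb
    have hb' : stMap n (τ b) g = stMap n C g := hb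
    change stMap n (τ (r * b)) g = stMap n C g
    have h := congrArg (stMap n (eval₂RingHom C (C (C r) * X))) hb'
    rw [stMap_stMap, stMap_stMap] at h
    have e1 : (eval₂RingHom C (C (C r) * X)).comp (τ b) = τ (r * b) := by
      apply ringHom_ext
      · intro a; simp [τ]
      · simp [τ]; ring
    have e2 : (eval₂RingHom (C : R[X] →+* R[X][X]) (C (C r) * X)).comp C = C := by
      apply ringHom_ext <;> simp
    rw [e1, e2] at h
    exact h

open Polynomial in
theorem main (n : ℕ) (h : DilationPrinciple n) (R : Type) [CommRing R]
    (g : SteinbergGroup n R[X])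
    (h0 : stMap n (evalRingHom (0 : R)) g = 1)
    (hg : ∀ (M : Ideal R) [M.IsMaximal],
      stMap n (mapRingHom (algebraMap R (Localization.AtPrime M))) g = 1) : g = 1 := by
  have htop : dilIdeal g = ⊤ := by
    by_contra hne
    obtain ⟨M, hM, hle⟩ := Ideal.exists_le_maximal _ hne
    obtain ⟨a, haM, ha⟩ := exists_away M g (hg M)
    have hnil : ¬ IsNilpotent (C a : R[X]) := by
      rintro ⟨k, hk⟩
      rw [← C_pow, C_eq_zero] at hk
      exact haM (hM.isPrime.mem_of_pow_mem k (hk ▸ M.zero_mem))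
    have hev0 : stMap n (evalRingHom (0 : R[X])) (stMap n (τ 1) g * (stMap n C g)⁻¹) = 1 := by
      rw [map_mul, map_inv, mul_inv_eq_one, stMap_stMap, stMap_stMap]
      congr 2
      apply ringHom_ext <;> simp [τ]
    have key : ∀ f : R[X] →+* R[X][X], (∀ r, f (C r) = C (C r)) →
        stMap n (mapRingHom (algebraMap R[X] (Localization.Away (C a : R[X])))) (stMap n f g)
          = 1 := by
      intro f hf
      let L := Localization.Away (C a : R[X])
      let θ₀ : R →+* L[X] := (C.comp (algebraMap R[X] L)).comp C
      have hu : IsUnit (θ₀ a) :=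
        (IsLocalization.Away.algebraMap_isUnit (S := L) (C a : R[X])).map C
      let θ : Localization.Away a →+* L[X] := IsLocalization.Away.lift a hu
      have e : (mapRingHom (algebraMap R[X] L)).comp f =
          (eval₂RingHom θ (mapRingHom (algebraMap R[X] L) (f X))).comp
            (mapRingHom (algebraMap R (Localization.Away a))) := by
        apply ringHom_ext
        · intro r
          simp [hf, θ, θ₀, IsLocalization.Away.lift_eq]
        · simp
      rw [stMap_stMap, e, ← stMap_stMap, ha, map_one]
    obtain ⟨m, hm⟩ := h R[X] (C a) hnil (stMap n (τ 1) g * (stMap n C g)⁻¹)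
      (stMap n (evalRingHom 0)) (fun i j hij p => stMap_stx _ _ _ _ _) hev0
      (stMap n (mapRingHom (algebraMap R[X] (Localization.Away (C a : R[X])))))
      (fun i j hij p => stMap_stx _ _ _ _ _)
      (by rw [map_mul, map_inv, key (τ 1) (by simp [τ]), key C (fun _ => rfl)]; simp)
    have h1 := hm (stMap n (compRingHom (C (C a ^ m) * X)))
      (fun i j hij p => stMap_stx _ _ _ _ _)
    rw [map_mul, map_inv, mul_inv_eq_one, stMap_stMap, stMap_stMap] at h1
    have e1 : (compRingHom (C (C a ^ m) * X)).comp (τ 1) = τ (a ^ m) := by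
      apply ringHom_ext <;> simp [τ]
    have e2 : (compRingHom (C (C a ^ m) * X)).comp (C : R[X] →+* R[X][X]) = C := by
      apply ringHom_ext <;> simp
    rw [e1, e2] at h1
    exact haM (hM.isPrime.mem_of_pow_mem m (hle h1))
  have h1 : stMap n (τ 1) g = stMap n C g := by
    have : (1 : R) ∈ dilIdeal g := htop ▸ Submodule.mem_top
    exact this
  have h2 := congrArg (stMap n (mapRingHom (evalRingHom (0 : R)))) h1
  rw [stMap_stMap, stMap_stMap] at h2
  have e1 : (mapRingHom (evalRingHom (0 : R))).comp (τ 1) = RingHom.id _ := by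
    apply ringHom_ext <;> simp [τ]
  have e2 : (mapRingHom (evalRingHom (0 : R))).comp C = C.comp (evalRingHom (0 : R)) := by
    apply ringHom_ext <;> simp
  rw [e1, e2, stMap_id, ← stMap_stMap, h0, map_one] at h2
  exact h2

end StLG

theorem stmt3 (n : ℕ) (hn : 3 ≤ n) (h : DilationPrinciple n) : LocalGlobalPrinciple n := by
  intro R _ g ev0 hev0 hg0
  constructor
  · rintro rfl M _ lM _
    exact map_one _
  · intro H
    apply StLG.main n h R g
    · rw [← StLG.eq_stMap (Polynomial.evalRingHom (0 : R)) ev0 hev0]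
      exact hg0
    · intro M _
      exact H M _ (fun i j hij p => StLG.stMap_stx _ _ _ _ _)
end

section
/- Fix n ≥ 3. If the functor St(n,−) satisfies the local–global principle (for every commutative ring R and every g ∈ St(n,R[X]) with (ev_{X=0})_*(g) = 1 ∈ St(n,R), g = 1 if and only if (λ_M)_*(g) = 1 ∈ St(n,R_M[X]) for all maximal ideals M of R), then for every commutative ring R the subgroup K₂(n,R) := ker(φ : St(n,R) → GL(n,R)) is central in St(n,R). -/
open scoped commutatorElement

namespace StP

/-- Rank one computation over a local ring. -/
theorem rankOne {G R : Type*} [Group G] [CommRing R] [IsLocalRing R] (H : Subgroup G)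
    (p m : R → G) (pa : ∀ r s, p (r + s) = p r * p s) (ma : ∀ r s, m (r + s) = m r * m s)
    (hp : ∀ h ∈ H, ∀ r, ∃ r', h * p r * h⁻¹ = p r')
    (hm : ∀ h ∈ H, ∀ r, ∃ r', h * m r * h⁻¹ = m r')
    (w : Rˣ → G) (hw : ∀ u : Rˣ, w u = p u * m (-(u⁻¹ : Rˣ)) * p u)
    (wp : ∀ (u : Rˣ) s, w u * p s * (w u)⁻¹ = m (-(u⁻¹ : Rˣ) * s * (u⁻¹ : Rˣ)))
    (wm : ∀ (u : Rˣ) s, w u * m s * (w u)⁻¹ = p (-u * s * u))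
    (ww : ∀ u v : Rˣ, w u * w v ∈ H) (r s t : R) :
    ∃ a b c, ∃ h ∈ H, m r * p s * m t = p a * m b * h * p c := by
  have p0 : p 0 = 1 := by have := pa 0 0; simpa using this
  have m0 : m 0 = 1 := by have := ma 0 0; simpa using this
  have pn : ∀ r, p (-r) = (p r)⁻¹ := fun r => by
    rw [eq_inv_iff_mul_eq_one, ← pa, neg_add_cancel, p0]
  have mn : ∀ r, m (-r) = (m r)⁻¹ := fun r => by
    rw [eq_inv_iff_mul_eq_one, ← ma, neg_add_cancel, m0]
  have wp' : ∀ (u : Rˣ) s, w u * p s = m (-(u⁻¹ : Rˣ) * s * (u⁻¹ : Rˣ)) * w u := fun u s => by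
    rw [← wp]; group
  have wm' : ∀ (u : Rˣ) s, w u * m s = p (-u * s * u) * w u := fun u s => by
    rw [← wm]; group
  have hp' : ∀ h ∈ H, ∀ r, ∃ r', p r * h = h * p r' := fun h hh r => by
    obtain ⟨r', e⟩ := hp _ (H.inv_mem hh) r
    exact ⟨r', by rw [← e]; group⟩
  have hm' : ∀ h ∈ H, ∀ r, ∃ r', h * m r = m r' * h := fun h hh r => by
    obtain ⟨r', e⟩ := hm _ hh r
    exact ⟨r', by rw [← e]; group⟩
  have wi : ∀ u, (w u)⁻¹ = w (-u) := fun u => by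
    rw [hw, hw]
    simp only [mul_inv_rev, ← pn, ← mn, Units.val_neg, inv_neg, mul_assoc]
  -- m of a unit
  have munit : ∀ v : Rˣ, m v = p (v⁻¹ : Rˣ) * w (-v⁻¹) * p (v⁻¹ : Rˣ) := fun v => by
    rw [hw]
    simp only [Units.val_neg, inv_neg, inv_inv, neg_neg, pn]
    group
  -- key, unit case
  have key1 : ∀ (u v : Rˣ) (t : R), (u⁻¹ : Rˣ) + t = v →
      ∃ h ∈ H, p u * m t = m (-(u⁻¹ : Rˣ) * (-u + (v⁻¹ : Rˣ)) * (u⁻¹ : Rˣ)) * h * p (v⁻¹ : Rˣ) := by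
    intro u v t e
    refine ⟨w u * w (-v⁻¹), ww _ _, ?_⟩
    have : m t = m (u⁻¹ : Rˣ) * m (-(u⁻¹ : Rˣ)) * m t := by rw [mn]; group
    have e2 : p u * m t = w u * p (-u) * m v := by
      rw [hw, ← e, ma, pn, mn]; group
    rw [e2, munit, ← mul_assoc, ← mul_assoc (m _), ← wp', pa]
    simp only [mul_assoc]
  have key : ∀ r t : R, ¬ IsUnit t → ∃ a c, ∃ h ∈ H, p r * m t = m a * h * p c := by
    have uu : ∀ (u : Rˣ) (t : R), ¬ IsUnit t → IsUnit ((u : R) + t) := by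
      intro u t ht
      by_contra hc
      have := IsLocalRing.nonunits_add hc (b := -t) (by simpa using ht)
      simp at this
    intro r t ht
    by_cases hr : IsUnit r
    · obtain ⟨u, rfl⟩ := hr
      obtain ⟨v, hv⟩ := uu u⁻¹ t ht
      obtain ⟨h, hh, e⟩ := key1 u v t hv.symm
      exact ⟨_, _, h, hh, e⟩
    · obtain ⟨v, hv⟩ := uu 1 t ht
      obtain ⟨h, hh, e⟩ := key1 1 v t (by simpa using hv.symm)
      have hr1 : IsUnit (r - 1) := by
        have := uu (-1) r hr
        convert this using 1
        simp; ring
      obtain ⟨u, hu⟩ := hr1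
      set t' := (-((1 : Rˣ)⁻¹ : Rˣ) * (-(1 : Rˣ) + (v⁻¹ : Rˣ)) * ((1 : Rˣ)⁻¹ : Rˣ) : R) with ht'
      have ht'' : ¬ IsUnit t' := by
        have : t' = t * (v⁻¹ : Rˣ) := by
          have h1 : (v : R) * (v⁻¹ : Rˣ) = 1 := by simp
          have h2 : (v : R) = 1 + t := by simpa using hv
          rw [h2] at h1
          rw [ht']
          simp only [inv_one, Units.val_one]
          linear_combination -h1
        rw [this]
        simpa using ht
      obtain ⟨v2, hv2⟩ := uu u⁻¹ t' ht''
      obtain ⟨h2, hh2, e2⟩ := key1 u v2 t' hv2.symm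
      obtain ⟨c, hc⟩ := hp' h hh (v2⁻¹ : Rˣ)
      refine ⟨(-(u⁻¹ : Rˣ) * (-u + (v2⁻¹ : Rˣ)) * (u⁻¹ : Rˣ)), c + (v⁻¹ : Rˣ), h2 * h,
        H.mul_mem hh2 hh, ?_⟩
      have : r = u + (1 : Rˣ) := by rw [hu]; simp
      rw [this, pa, mul_assoc, e, pa]
      calc _ = (p u * m t') * h * p (v⁻¹ : Rˣ) := by group
        _ = _ := by
          rw [e2]
          calc _ = m (-(u⁻¹ : Rˣ) * (-u + (v2⁻¹ : Rˣ)) * (u⁻¹ : Rˣ)) * h2 * (p (v2⁻¹ : Rˣ) * h) *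
                p (v⁻¹ : Rˣ) := by group
            _ = _ := by rw [hc]; group
  -- the cells
  let A : Set G := {g | (∃ a c, ∃ h ∈ H, g = m a * h * p c) ∨
    (∃ a c, ∃ h ∈ H, g = p a * w 1 * h * p c)}
  have Ap : ∀ r, ∀ g ∈ A, p r * g ∈ A := by
    rintro r g (⟨a, c, h, hh, rfl⟩ | ⟨a, c, h, hh, rfl⟩)
    · by_cases ha : IsUnit a
      · obtain ⟨v, rfl⟩ := ha
        right
        obtain ⟨c', hc'⟩ := hp' h hh (v⁻¹ : Rˣ)
        refine ⟨r + (v⁻¹ : Rˣ), c' + c, (w 1)⁻¹ * w (-v⁻¹) * h,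
          H.mul_mem (by rw [wi]; exact ww _ _) hh, ?_⟩
        rw [munit, pa, pa]
        calc _ = p r * p (v⁻¹ : Rˣ) * w (-v⁻¹) * (p (v⁻¹ : Rˣ) * h) * p c := by group
          _ = _ := by rw [hc']; group
      · left
        obtain ⟨a', c', h', hh', e⟩ := key r a ha
        obtain ⟨c'', hc''⟩ := hp' h hh c'
        refine ⟨a', c'' + c, h' * h, H.mul_mem hh' hh, ?_⟩
        calc _ = (p r * m a) * h * p c := by group
          _ = m a' * h' * (p c' * h) * p c := by rw [e]; group
          _ = _ := by rw [hc'', pa]; group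
    · right
      exact ⟨r + a, c, h, hh, by rw [pa]; group⟩
  have Aw : ∀ u, ∀ g ∈ A, w u * g ∈ A := by
    rintro u g (⟨a, c, h, hh, rfl⟩ | ⟨a, c, h, hh, rfl⟩)
    · right
      refine ⟨-u * a * u, c, (w 1)⁻¹ * w u * h, H.mul_mem (by rw [wi]; exact ww _ _) hh, ?_⟩
      rw [← mul_assoc, ← mul_assoc, wm']; group
    · left
      refine ⟨-(u⁻¹ : Rˣ) * a * (u⁻¹ : Rˣ), c, w u * w 1 * h, H.mul_mem (ww _ _) hh, ?_⟩
      rw [← mul_assoc, ← mul_assoc, ← mul_assoc, wp']; simp only [mul_assoc]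
  have Am : ∀ r, ∀ g ∈ A, m r * g ∈ A := by
    intro r g hg
    have e : m r * g = w 1 * (p (-r) * (w (-1) * g)) := by
      have := wp 1 (-r)
      simp at this
      rw [← this, ← wi]; group
    rw [e]
    exact Aw _ _ (Ap _ _ (Aw _ _ hg))
  have h1 : (1 : G) ∈ A := Or.inl ⟨0, 0, 1, H.one_mem, by simp [p0, m0]⟩
  have := Am r _ (Ap s _ (Am t _ h1))
  rw [mul_one, ← mul_assoc] at this
  obtain (⟨a, c, h, hh, e⟩ | ⟨a, c, h, hh, e⟩) := this
  · exact ⟨0, a, c, h, hh, by rw [e, p0]; group⟩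
  · obtain ⟨c', hc'⟩ := hp' h hh 1
    refine ⟨a + 1, -1, c' + c, h, hh, ?_⟩
    have h2 := hw 1
    simp at h2
    rw [e, pa, pa, h2]
    calc _ = p a * p 1 * m (-1) * (p 1 * h) * p c := by group
      _ = _ := by rw [hc']; group

end StP

namespace StP

structure Sys {G : Type} [Group G] {n : ℕ} {S : Type} [CommRing S]
    (x : Fin n → Fin n → S → G) (φ : G →* Matrix (Fin n) (Fin n) S) : Prop where
  add : ∀ i j r s, x i j (r + s) = x i j r * x i j s
  c0 : ∀ i j h k r s, j ≠ h → i ≠ k → x i j r * x h k s * (x i j r)⁻¹ = x h k s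
  c1 : ∀ i j k r s, i ≠ j → j ≠ k → i ≠ k →
    x i j r * x j k s * (x i j r)⁻¹ = x i k (r * s) * x j k s
  ph : ∀ i j r, i ≠ j → φ (x i j r) = 1 + Matrix.single i j r

variable {G : Type} [Group G] {n : ℕ} {R S : Type} [CommRing R] [CommRing S]
    {x : Fin n → Fin n → S → G} {φ : G →* Matrix (Fin n) (Fin n) S}

theorem Sys.zero (hx : Sys x φ) (i j) : x i j 0 = 1 := by
  have := hx.add i j 0 0; simpa using this

theorem Sys.neg (hx : Sys x φ) (i j r) : x i j (-r) = (x i j r)⁻¹ := by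
  rw [eq_inv_iff_mul_eq_one, ← hx.add, neg_add_cancel, hx.zero]

theorem Sys.c2 (hx : Sys x φ) (i j k r s) (hij : i ≠ j) (hjk : j ≠ k) (hik : i ≠ k) :
    x j k s * x i j r * (x j k s)⁻¹ = x i j r * x i k (-(r * s)) := by
  have h1 := hx.c1 i j k r s hij hjk hik
  have h2 := hx.c0 j k i k s (r * s) hik.symm hjk
  have h3 := hx.c0 i j i k r (r * s) hij.symm hik
  rw [hx.neg]
  have h1' : x i k (r * s) = x i j r * x j k s * (x i j r)⁻¹ * (x j k s)⁻¹ := by rw [h1]; group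
  have h3' : x i j r * (x i k (r*s))⁻¹ = (x i k (r*s))⁻¹ * x i j r := by
    rw [mul_inv_eq_iff_eq_mul] at h3
    rw [mul_inv_eq_iff_eq_mul, mul_assoc, h3]; group
  rw [h3', h1']; group

theorem Sys.comm (hx : Sys x φ) (i j k r s) (hij : i ≠ j) (hjk : j ≠ k) (hik : i ≠ k) :
    x i k (r * s) = ⁅x i j r, x j k s⁆ := by
  rw [commutatorElement_def, hx.c1 i j k r s hij hjk hik]; group

def w (x : Fin n → Fin n → S → G) (i j : Fin n) (u : Sˣ) : G :=
  x i j u * x j i (-(u⁻¹ : Sˣ)) * x i j u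

/-- coefficients of w -/
def wc (i j : Fin n) (u : Sˣ) (k : Fin n) : Sˣ := if k = i then -u⁻¹ else if k = j then u else 1

theorem conj_w (x : Fin n → Fin n → S → G) (i j : Fin n) (u : Sˣ) (g : G) :
    w x i j u * g * (w x i j u)⁻¹ = x i j u * (x j i (-(u⁻¹ : Sˣ)) * (x i j u * g * (x i j u)⁻¹) *
      (x j i (-(u⁻¹ : Sˣ)))⁻¹) * (x i j u)⁻¹ := by
  unfold w; group

theorem conj_mul' (a b g : G) : g * (a * b) * g⁻¹ = (g * a * g⁻¹) * (g * b * g⁻¹) := by group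

theorem Sys.w_conj (hx : Sys x φ) (hn : 3 ≤ n) (i j : Fin n) (hij : i ≠ j) (u : Sˣ) (k l : Fin n)
    (hkl : k ≠ l) (s : S) :
    w x i j u * x k l s * (w x i j u)⁻¹ =
      x (Equiv.swap i j k) (Equiv.swap i j l) (wc i j u k * s * (((wc i j u l)⁻¹ : Sˣ) : S)) := by
  have hji := hij.symm
  have jk : ∀ k s, k ≠ i → k ≠ j → w x i j u * x j k s * (w x i j u)⁻¹ = x i k (u * s) := by
    intro k s hki hkj
    rw [conj_w, hx.c1 i j k _ _ hij hkj.symm hki.symm, conj_mul' (x i k _),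
      hx.c1 j i k _ _ hji hki.symm hkj.symm, hx.c0 j i j k _ _ hij hkj.symm,
      mul_assoc (x j k _)]
    have : x i k (u * s) * x j k s = x j k s * x i k (u * s) := by
      have := hx.c0 i k j k (u * s) s hkj hki.symm
      rwa [mul_inv_eq_iff_eq_mul] at this
    rw [this, ← mul_assoc (x j k _), ← hx.add]
    simp [hx.zero]
    exact hx.c0 _ _ _ _ _ _ hji hki.symm
  have ik : ∀ k s, k ≠ i → k ≠ j → w x i j u * x i k s * (w x i j u)⁻¹ =
      x j k (-(u⁻¹ : Sˣ) * s) := by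
    intro k s hki hkj
    rw [conj_w, hx.c0 i j i k _ _ hji hki.symm, hx.c1 j i k _ _ hji hki.symm hkj.symm,
      conj_mul', hx.c1 i j k _ _ hij hkj.symm hki.symm, hx.c0 i j i k _ _ hji hki.symm]
    have : ∀ a b, x i k a * x j k b = x j k b * x i k a := by
      intro a b
      have := hx.c0 i k j k a b hkj hki.symm
      rwa [mul_inv_eq_iff_eq_mul] at this
    rw [this, mul_assoc, ← hx.add]
    simp [hx.zero]
  have kj : ∀ k s, k ≠ i → k ≠ j → w x i j u * x k j s * (w x i j u)⁻¹ =
      x k i (s * (u⁻¹ : Sˣ)) := by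
    intro k s hki hkj
    rw [conj_w, hx.c0 i j k j _ _ hkj.symm hij, hx.c2 k j i _ _ hkj hji hki, conj_mul',
      hx.c0 i j k j _ _ hkj.symm hij, hx.c2 k i j _ _ hki hij hkj]
    have : ∀ a b, x k j a * x k i b = x k i b * x k j a := by
      intro a b
      have := hx.c0 k j k i a b hkj.symm hki
      rwa [mul_inv_eq_iff_eq_mul] at this
    rw [← mul_assoc, this, mul_assoc, ← hx.add]
    simp [hx.zero]
  have ki : ∀ k s, k ≠ i → k ≠ j → w x i j u * x k i s * (w x i j u)⁻¹ = x k j (-(s * u)) := by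
    intro k s hki hkj
    rw [conj_w, hx.c2 k i j _ _ hki hij hkj, conj_mul' (x k i _), hx.c0 j i k i _ _ hki.symm hji,
      hx.c2 k j i _ _ hkj hji hki]
    have : ∀ a b, x k j a * x k i b = x k i b * x k j a := by
      intro a b
      have := hx.c0 k j k i a b hkj.symm hki
      rwa [mul_inv_eq_iff_eq_mul] at this
    rw [this, ← mul_assoc (x k i _), ← hx.add]
    simp [hx.zero]
    exact hx.c0 _ _ _ _ _ _ hkj.symm hij
  obtain ⟨m, hmi, hmj⟩ : ∃ m : Fin n, m ≠ i ∧ m ≠ j := by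
    have : ({i, j} : Finset (Fin n)).card < (Finset.univ : Finset (Fin n)).card := by
      rw [Finset.card_univ, Fintype.card_fin]
      exact lt_of_le_of_lt Finset.card_le_two (by omega)
    obtain ⟨m, -, hm⟩ := Finset.exists_mem_notMem_of_card_lt_card this
    simp at hm
    exact ⟨m, hm.1, hm.2⟩
  have hcom : ∀ a b : G, w x i j u * ⁅a, b⁆ * (w x i j u)⁻¹ =
      ⁅w x i j u * a * (w x i j u)⁻¹, w x i j u * b * (w x i j u)⁻¹⁆ := by
    intro a b; simp only [commutatorElement_def]; group
  have eij : ∀ s, w x i j u * x i j s * (w x i j u)⁻¹ =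
      x j i (-(u⁻¹ : Sˣ) * s * (u⁻¹ : Sˣ)) := by
    intro s
    have := hx.comm i m j s 1 hmi.symm hmj hij
    rw [mul_one] at this
    rw [this, hcom, ik m s hmi hmj, kj m 1 hmi hmj, ← hx.comm j m i _ _ hmj.symm hmi hji, one_mul]
  have eji : ∀ s, w x i j u * x j i s * (w x i j u)⁻¹ = x i j (-u * s * u) := by
    intro s
    have := hx.comm j m i s 1 hmj.symm hmi hji
    rw [mul_one] at this
    rw [this, hcom, jk m s hmi hmj, ki m 1 hmi hmj, ← hx.comm i m j _ _ hmi.symm hmj hij, one_mul]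
    congr 1; ring
  by_cases hki : k = i
  · subst hki
    by_cases hlj : l = j
    · subst hlj
      rw [eij]; simp [wc, hji]
    · rw [ik l s hkl.symm hlj, Equiv.swap_apply_of_ne_of_ne hkl.symm hlj]
      simp [wc, hkl.symm, hlj]
  by_cases hkj : k = j
  · subst hkj
    by_cases hli : l = i
    · subst hli
      rw [eji]; simp [wc, hji]
    · rw [jk l s hli hkl.symm, Equiv.swap_apply_of_ne_of_ne hli hkl.symm]
      simp [wc, hkl.symm, hli, hki]
  rw [Equiv.swap_apply_of_ne_of_ne hki hkj]
  by_cases hli : l = i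
  · subst hli
    rw [ki k s hki hkj]; simp [wc, hki, hkj]
  by_cases hlj : l = j
  · subst hlj
    rw [kj k s hki hkj]; simp [wc, hki, hkj, hli]
  rw [Equiv.swap_apply_of_ne_of_ne hli hlj, conj_w, hx.c0 i j k l _ _ (Ne.symm hkj) (Ne.symm hli),
    hx.c0 j i k l _ _ (Ne.symm hki) (Ne.symm hlj), hx.c0 i j k l _ _ (Ne.symm hkj) (Ne.symm hli)]
  simp [wc, *]

theorem sneg (i j : Fin n) (s : S) : Matrix.single i j (-s) = -Matrix.single i j s := by
  ext k l; simp [Matrix.single_apply]; split_ifs <;> simp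

theorem Sys.w_phi (hx : Sys x φ) (i j : Fin n) (hij : i ≠ j) (u : Sˣ) :
    φ (w x i j u) = 1 - Matrix.single i i 1 - Matrix.single j j 1 + Matrix.single i j (u : S)
      - Matrix.single j i ((u⁻¹ : Sˣ) : S) := by
  rw [w, map_mul, map_mul, hx.ph _ _ _ hij, hx.ph _ _ _ hij.symm]
  simp [mul_add, add_mul, Matrix.single_mul_single_of_ne, hij, hij.symm, sneg]
  abel

theorem Sys.ww_phi (hx : Sys x φ) (i j : Fin n) (hij : i ≠ j) (u v : Sˣ) :
    φ (w x i j u * w x i j v) =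
      Matrix.diagonal fun k => ((wc i j v k * wc i j u (Equiv.swap i j k) : Sˣ) : S) := by
  rw [map_mul, hx.w_phi _ _ hij, hx.w_phi _ _ hij]
  have : (Matrix.diagonal fun k => ((wc i j v k * wc i j u (Equiv.swap i j k) : Sˣ) : S)) =
      1 - Matrix.single i i 1 - Matrix.single j j 1 - Matrix.single i i ((u : S) * (v⁻¹ : Sˣ))
        - Matrix.single j j (((u⁻¹ : Sˣ) : S) * v) := by
    ext k l
    by_cases hkl : k = l
    · subst hkl
      by_cases hki : k = i
      · subst hki
        simp [wc, Matrix.single_apply, hij, hij.symm, mul_comm]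
      by_cases hkj : k = j
      · subst hkj
        simp [wc, Matrix.single_apply, hij, hij.symm, mul_comm]
      rw [Matrix.diagonal_apply_eq, Equiv.swap_apply_of_ne_of_ne hki hkj]
      simp [wc, Matrix.single_apply, hki, hkj, Ne.symm hki, Ne.symm hkj]
    · have : ∀ m c, (Matrix.single m m c : Matrix (Fin n) (Fin n) S) k l = 0 := by
        intro m c; rw [Matrix.single_apply, if_neg]; rintro ⟨rfl, rfl⟩; exact hkl rfl
      simp [hkl, this]
  rw [this]
  simp [mul_add, add_mul, mul_sub, sub_mul, Matrix.single_mul_single_of_ne, hij, hij.symm]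
  abel

end StP

namespace StP

variable {G : Type} [Group G] {n : ℕ} {R S : Type} [CommRing R] [CommRing S]
    {x : Fin n → Fin n → S → G} {φ : G →* Matrix (Fin n) (Fin n) S}

/-- torus -/
def T (x : Fin n → Fin n → S → G) (φ : G →* Matrix (Fin n) (Fin n) S) (f : R →+* S) :
    Subgroup G where
  carrier := {g | ∃ d : Fin n → Rˣ, φ g = Matrix.diagonal (fun k => f (d k)) ∧
    ∀ k l s, k ≠ l → g * x k l s * g⁻¹ = x k l (f (d k) * s * f ((d l)⁻¹ : Rˣ))}
  one_mem' := ⟨1, by simp, by simp⟩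
  mul_mem' := by
    rintro a b ⟨d, hd, ha⟩ ⟨e, he, hb⟩
    refine ⟨d * e, by simp [hd, he], fun k l s hkl => ?_⟩
    have : a * b * x k l s * (a * b)⁻¹ = a * (b * x k l s * b⁻¹) * a⁻¹ := by group
    rw [this, hb _ _ _ hkl, ha _ _ _ hkl]
    congr 1
    simp; ring
  inv_mem' := by
    rintro a ⟨d, hd, ha⟩
    refine ⟨d⁻¹, ?_, fun k l s hkl => ?_⟩
    · refine left_inv_eq_right_inv (b := φ a⁻¹) (a := φ a) ?_ ?_
      · rw [← map_mul]; simp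
      · rw [hd, Matrix.diagonal_mul_diagonal, ← Matrix.diagonal_one]
        congr 1; funext k
        rw [← map_mul]; simp
    · have := ha k l (f ((d k)⁻¹ : Rˣ) * s * f (d l)) hkl
      have e : f (d k) * (f ((d k)⁻¹ : Rˣ) * s * f (d l)) * f ((d l)⁻¹ : Rˣ) = s := by
        have h1 : f (d k) * f ((d k)⁻¹ : Rˣ) = 1 := by rw [← map_mul]; simp
        have h2 : f (d l) * f ((d l)⁻¹ : Rˣ) = 1 := by rw [← map_mul]; simp
        linear_combination s * f (d l) * f ((d l)⁻¹ : Rˣ) * h1 + s * h2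
      rw [e] at this
      rw [← this]
      simp
      group

theorem Sys.ww_mem (hx : Sys x φ) (hn : 3 ≤ n) (f : R →+* S) (i j : Fin n) (hij : i ≠ j)
    (u v : Rˣ) :
    w x i j (Units.map f u) * w x i j (Units.map f v) ∈ T x φ f := by
  have hc : ∀ (u : Rˣ) k, wc i j (Units.map (f : R →* S) u) k = Units.map (f : R →* S) (wc i j u k) := by
    intro u k
    unfold wc
    split_ifs
    · ext; simp
    · rfl
    · simp
  refine ⟨fun k => wc i j v k * wc i j u (Equiv.swap i j k), ?_, ?_⟩
  · rw [hx.ww_phi i j hij]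
    simp [hc]
  · intro k l s hkl
    have : ∀ a b c : G, a * b * c * (a * b)⁻¹ = a * (b * c * b⁻¹) * a⁻¹ := by intros; group
    rw [this, hx.w_conj hn i j hij _ k l hkl, hx.w_conj hn i j hij _ _ _ (by simpa using hkl)]
    simp only [Equiv.swap_apply_self]
    congr 1
    simp [hc, ← map_inv]
    ring

def U (x : Fin n → Fin n → S → G) (f : R →+* S) (ρ : Fin n → Fin n → Prop) : Subgroup G :=
  Subgroup.closure {g | ∃ i j r, ρ i j ∧ g = x i j (f r)}

theorem U_gen (f : R →+* S) {ρ : Fin n → Fin n → Prop} {i j : Fin n} (h : ρ i j) (r : R) :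
    x i j (f r) ∈ U x f ρ := Subgroup.subset_closure ⟨i, j, r, h, rfl⟩

theorem U_mono (f : R →+* S) {ρ ρ' : Fin n → Fin n → Prop} (h : ∀ i j, ρ i j → ρ' i j) :
    U x f ρ ≤ U x f ρ' := by
  apply Subgroup.closure_mono
  rintro g ⟨i, j, r, hr, rfl⟩
  exact ⟨i, j, r, h _ _ hr, rfl⟩

theorem norm_gen (f : R →+* S) {ρ : Fin n → Fin n → Prop} (c : G)
    (h : ∀ i j r, ρ i j → c * x i j (f r) * c⁻¹ ∈ U x f ρ) {g : G} (hg : g ∈ U x f ρ) :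
    c * g * c⁻¹ ∈ U x f ρ := by
  have : U x f ρ ≤ (U x f ρ).comap (MulAut.conj c).toMonoidHom := by
    conv_lhs => unfold U
    rw [Subgroup.closure_le]
    rintro g ⟨i, j, r, hr, rfl⟩
    exact h i j r hr
  exact this hg

theorem T_norm (f : R →+* S) {ρ : Fin n → Fin n → Prop} (hρ : ∀ i j, ρ i j → i ≠ j) {c : G}
    (hc : c ∈ T x φ f) {g : G} (hg : g ∈ U x f ρ) : c * g * c⁻¹ ∈ U x f ρ := by
  refine norm_gen f c ?_ hg
  obtain ⟨d, -, h⟩ := hc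
  intro i j r hr
  rw [h _ _ _ (hρ _ _ hr), ← map_mul, ← map_mul]
  exact U_gen f hr _

/-- closed under brackets with (i,j) -/
def Nrm (ρ : Fin n → Fin n → Prop) (i j : Fin n) : Prop :=
  i ≠ j ∧ ¬ ρ j i ∧ (∀ k l, ρ k l → k ≠ l) ∧ (∀ k, ρ k i → ρ k j) ∧ (∀ l, ρ j l → ρ i l)

theorem Sys.x_norm (hx : Sys x φ) (f : R →+* S) {ρ : Fin n → Fin n → Prop} {i j : Fin n}
    (h : Nrm ρ i j) (r : R) {g : G} (hg : g ∈ U x f ρ) :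
    x i j (f r) * g * (x i j (f r))⁻¹ ∈ U x f ρ := by
  refine norm_gen f _ ?_ hg
  obtain ⟨hij, hji, hne, h1, h2⟩ := h
  intro k l s hkl
  by_cases hl : l = i
  · subst hl
    have hkj : k ≠ j := by rintro rfl; exact hji hkl
    rw [hx.c2 k l j _ _ (hne _ _ hkl) hij hkj, ← map_mul, ← map_neg]
    exact Subgroup.mul_mem _ (U_gen f hkl _) (U_gen f (h1 _ hkl) _)
  by_cases hk : k = j
  · subst hk
    rw [hx.c1 i k l _ _ hij (hne _ _ hkl) (Ne.symm hl), ← map_mul]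
    exact Subgroup.mul_mem _ (U_gen f (h2 _ hkl) _) (U_gen f hkl _)
  rw [hx.c0 i j k l _ _ (Ne.symm hk) (Ne.symm hl)]
  exact U_gen f hkl _

theorem Sys.decomp (hx : Sys x φ) (f : R →+* S) {ρ ρ' : Fin n → Fin n → Prop} {i j : Fin n}
    (h : Nrm ρ' i j) (hρ : ∀ k l, ρ k l → ρ' k l ∨ (k = i ∧ l = j)) {g : G} (hg : g ∈ U x f ρ) :
    ∃ r, ∃ u ∈ U x f ρ', g = x i j (f r) * u := by
  have key : ∀ k l s, ρ k l → ∀ y, (∃ r, ∃ u ∈ U x f ρ', y = x i j (f r) * u) →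
      (∃ r, ∃ u ∈ U x f ρ', x k l (f s) * y = x i j (f r) * u) := by
    rintro k l s hkl y ⟨r, u, hu, rfl⟩
    rcases hρ k l hkl with h' | ⟨rfl, rfl⟩
    · refine ⟨r, (x i j (f (-r)) * x k l (f s) * (x i j (f (-r)))⁻¹) * u,
        Subgroup.mul_mem _ (hx.x_norm f h _ (U_gen f h' _)) hu, ?_⟩
      rw [map_neg, hx.neg]; group
    · exact ⟨s + r, u, hu, by rw [map_add, hx.add, mul_assoc]⟩
  unfold U at hg
  induction hg using Subgroup.closure_induction_left with
  | one => exact ⟨0, 1, Subgroup.one_mem _, by simp [hx.zero]⟩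
  | mul_left a ha y hy ih =>
    obtain ⟨k, l, s, hkl, rfl⟩ := ha
    exact key _ _ _ hkl _ ih
  | inv_mul_cancel a ha y hy ih =>
    obtain ⟨k, l, s, hkl, rfl⟩ := ha
    rw [← hx.neg, ← map_neg]
    exact key _ _ _ hkl _ ih

theorem Sys.decomp' (hx : Sys x φ) (f : R →+* S) {ρ ρ' : Fin n → Fin n → Prop} {i j : Fin n}
    (h : Nrm ρ' i j) (hρ : ∀ k l, ρ k l → ρ' k l ∨ (k = i ∧ l = j)) {g : G} (hg : g ∈ U x f ρ) :
    ∃ r, ∃ u ∈ U x f ρ', g = u * x i j (f r) := by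
  obtain ⟨r, u, hu, rfl⟩ := hx.decomp f h hρ hg
  exact ⟨r, _, hx.x_norm f h r hu, by group⟩

theorem Sys.pattern (hx : Sys x φ) (f : R →+* S) {ρ : Fin n → Fin n → Prop}
    (irr : ∀ k, ¬ ρ k k) (tr : ∀ i j k, ρ i j → ρ j k → ρ i k) {g : G} (hg : g ∈ U x f ρ) :
    (∀ k, φ g k k = 1) ∧ ∀ k l, k ≠ l → ¬ ρ k l → φ g k l = 0 := by
  have key : ∀ i j s, ρ i j → ∀ y, ((∀ k, φ y k k = 1) ∧ ∀ k l, k ≠ l → ¬ ρ k l → φ y k l = 0) →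
    ((∀ k, φ (y * x i j s) k k = 1) ∧ ∀ k l, k ≠ l → ¬ ρ k l → φ (y * x i j s) k l = 0) := by
    rintro i j s hij y ⟨h1, h2⟩
    have hne : i ≠ j := by rintro rfl; exact irr _ hij
    have e : ∀ k l, φ (y * x i j s) k l = φ y k l + if l = j then φ y k i * s else 0 := by
      intro k l
      rw [map_mul, hx.ph _ _ _ hne, mul_add, mul_one, Matrix.add_apply]
      split_ifs with h
      · subst h; simp
      · rw [Matrix.mul_single_apply_of_ne _ _ _ _ _ h]
    constructor
    · intro k
      rw [e, h1]
      split_ifs with h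
      · subst h
        rw [h2 _ _ hne.symm (fun h => irr _ (tr _ _ _ h hij))]; simp
      · simp
    · intro k l hkl hn
      rw [e, h2 _ _ hkl hn]
      split_ifs with h
      · subst h
        have : k ≠ i := by rintro rfl; exact hn hij
        rw [h2 _ _ this (fun h => hn (tr _ _ _ h hij))]; simp
      · simp
  unfold U at hg
  induction hg using Subgroup.closure_induction_right with
  | one => exact ⟨by simp, fun k l hkl _ => by simp [hkl]⟩
  | mul_right y hy a ha ih =>
    obtain ⟨k, l, s, hkl, rfl⟩ := ha
    exact key _ _ _ hkl _ ih
  | mul_inv_cancel y hy a ha ih =>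
    obtain ⟨k, l, s, hkl, rfl⟩ := ha
    rw [← hx.neg]
    exact key _ _ _ hkl _ ih

theorem Sys.inj (hx : Sys x φ) (f : R →+* S) (μ : Fin n → ℤ) : ∀ (N : ℕ)
    (P : Finset (Fin n × Fin n)), P.card = N → (∀ p ∈ P, μ p.1 < μ p.2) →
    (∀ i j k, (i, j) ∈ P → (j, k) ∈ P → (i, k) ∈ P) →
    ∀ g ∈ U x f (fun i j => (i, j) ∈ P), φ g = 1 → g = 1 := by
  intro N
  induction N with
  | zero =>
    intro P hP _ _ g hg _
    rw [Finset.card_eq_zero] at hP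
    subst hP
    unfold U at hg
    simpa using hg
  | succ N ih =>
    intro P hP hμ tr g hg h1
    have hne : P.Nonempty := by rw [← Finset.card_pos]; omega
    obtain ⟨⟨i, j⟩, hij, hmin⟩ := P.exists_min_image (fun p => μ p.2 - μ p.1) hne
    have hlt := hμ _ hij
    simp only at hlt hmin
    have nomid : ∀ k, (i, k) ∈ P → (k, j) ∈ P → False := by
      intro k h1 h2
      have := hmin _ h1
      have := hμ _ h2
      simp only at *
      omega
    have ne : ∀ k l, (k, l) ∈ P → k ≠ l := by
      rintro k l h rfl
      exact lt_irrefl _ (hμ _ h)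
    have tr' : ∀ a b c, (a, b) ∈ P.erase (i, j) → (b, c) ∈ P.erase (i, j) →
        (a, c) ∈ P.erase (i, j) := by
      intro a b c hab hbc
      rw [Finset.mem_erase] at *
      refine ⟨?_, tr _ _ _ hab.2 hbc.2⟩
      intro e
      simp only [Prod.mk.injEq] at e
      obtain ⟨rfl, rfl⟩ := e
      exact nomid _ hab.2 hbc.2
    have nrm : Nrm (fun a b => (a, b) ∈ P.erase (i, j)) i j := by
      refine ⟨ne _ _ hij, ?_, ?_, ?_, ?_⟩
      · intro h
        have := hμ _ (Finset.mem_of_mem_erase h)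
        simp only at this
        omega
      · intro k l h
        exact ne _ _ (Finset.mem_of_mem_erase h)
      · intro k h
        have h := Finset.mem_of_mem_erase h
        refine Finset.mem_erase.2 ⟨?_, tr _ _ _ h hij⟩
        intro e
        simp only [Prod.mk.injEq] at e
        exact ne _ _ h e.1
      · intro k h
        have h := Finset.mem_of_mem_erase h
        refine Finset.mem_erase.2 ⟨?_, tr _ _ _ hij h⟩
        intro e
        simp only [Prod.mk.injEq] at e
        exact ne _ _ h e.2.symm
    obtain ⟨r, u, hu, rfl⟩ := hx.decomp f (ρ' := fun a b => (a, b) ∈ P.erase (i, j)) nrm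
      (by
        intro k l h
        by_cases e : (k, l) = (i, j)
        · right; simpa using e
        · left; exact Finset.mem_erase.2 ⟨e, h⟩) hg
    have pat := hx.pattern f (fun k h => ne k k (Finset.mem_of_mem_erase h) rfl) tr' hu
    have hr : f r = 0 := by
      have := congrFun (congrFun h1 i) j
      rw [map_mul, hx.ph _ _ _ (ne _ _ hij), add_mul, one_mul, Matrix.add_apply,
        pat.2 _ _ (ne _ _ hij) (by simp), Matrix.single_mul_apply_same, pat.1,
        Matrix.one_apply_ne (ne _ _ hij)] at this
      simpa using this
    rw [hr, hx.zero, one_mul] at h1 ⊢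
    exact ih _ (by rw [Finset.card_erase_of_mem hij]; omega)
      (fun p hp => hμ _ (Finset.mem_of_mem_erase hp)) tr' u hu h1

theorem Sys.inj_lt (hx : Sys x φ) (f : R →+* S) {g : G} (hg : g ∈ U x f (· < ·)) (h : φ g = 1) :
    g = 1 := by
  refine hx.inj f (fun i => (i.val : ℤ)) _ (Finset.univ.filter fun p => p.1 < p.2) rfl ?_ ?_ g ?_ h
  · intro p hp; simpa using hp
  · intro i j k; simpa using fun a b => lt_trans a b
  · simpa using hg

theorem Sys.inj_gt (hx : Sys x φ) (f : R →+* S) {g : G} (hg : g ∈ U x f (fun i j => j < i))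
    (h : φ g = 1) : g = 1 := by
  refine hx.inj f (fun i => -(i.val : ℤ)) _ (Finset.univ.filter fun p => p.2 < p.1) rfl ?_ ?_ g ?_ h
  · intro p hp; simpa using hp
  · intro i j k; simpa using fun a b => lt_trans b a
  · simpa using hg

/-- elements of the big cell in the kernel are central -/
theorem Sys.cell (hx : Sys x φ) (f : R →+* S) {b h c : G} (hb : b ∈ U x f (fun i j => j < i))
    (hh : h ∈ T x φ f) (hc : c ∈ U x f (· < ·)) (e : φ (b * h * c) = 1) :
    ∀ k l s, k ≠ l → (b * h * c) * x k l s * (b * h * c)⁻¹ = x k l s := by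
  obtain ⟨d, hd, hcj⟩ := hh
  have pb := hx.pattern f (ρ := fun i j => j < i) (fun k h => lt_irrefl k h) (fun i j k h1 h2 => lt_trans h2 h1) hb
  have pc := hx.pattern f (ρ := (· < ·)) (fun k h => lt_irrefl k h) (fun i j k h1 h2 => lt_trans h1 h2)
    (Subgroup.inv_mem _ hc)
  have e2 : φ b * φ h = φ c⁻¹ := by
    have : φ (b * h * c) * φ c⁻¹ = φ b * φ h := by rw [← map_mul, ← map_mul]; simp
    rw [← this, e, one_mul]
  have ent : ∀ k l, φ b k l * f (d l) = φ c⁻¹ k l := by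
    intro k l; rw [← e2, hd, Matrix.mul_diagonal]
  have hd1 : ∀ k, f (d k) = 1 := by
    intro k; have := ent k k; rwa [pb.1, pc.1, one_mul] at this
  have hb1 : φ b = 1 := by
    ext k l
    by_cases hkl : k = l
    · subst hkl; rw [pb.1]; simp
    rw [Matrix.one_apply_ne hkl]
    rcases lt_or_gt_of_ne hkl with h' | h'
    · exact pb.2 _ _ hkl (by simpa using h'.le)
    · have := ent k l
      rw [hd1, mul_one] at this
      rw [this]
      exact pc.2 _ _ hkl (by simpa using h'.le)
  have hb' := hx.inj_gt f hb hb1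
  have hc' : c = 1 := by
    have : φ c⁻¹ = 1 := by
      rw [← e2, hb1, hd]; simp [hd1]
    have := hx.inj_lt f (Subgroup.inv_mem _ hc) this
    simpa using this
  subst hb' hc'
  intro k l s hkl
  have h3 : f ((d l)⁻¹ : Rˣ) = 1 := by
    have : f (d l) * f ((d l)⁻¹ : Rˣ) = 1 := by rw [← map_mul]; simp
    rwa [hd1, one_mul] at this
  have := hcj k l s hkl
  rw [hd1, h3] at this
  simpa using this

end StP

namespace StP

variable {G : Type} [Group G] {n : ℕ} {R S : Type} [CommRing R] [CommRing S]
    {x : Fin n → Fin n → S → G} {φ : G →* Matrix (Fin n) (Fin n) S}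

theorem Sys.rank1 [IsLocalRing R] (hx : Sys x φ) (hn : 3 ≤ n) (f : R →+* S) (i j : Fin n)
    (hij : i ≠ j) (r s t : R) :
    ∃ a b c, ∃ h ∈ T x φ f, x j i (f r) * x i j (f s) * x j i (f t) =
      x i j (f a) * x j i (f b) * h * x i j (f c) := by
  refine rankOne (T x φ f) (fun r => x i j (f r)) (fun r => x j i (f r)) ?_ ?_ ?_ ?_
    (fun u => w x i j (Units.map f u)) ?_ ?_ ?_ ?_ r s t
  · intro r s; simp only [map_add, hx.add]
  · intro r s; simp only [map_add, hx.add]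
  · rintro h ⟨d, -, hd⟩ r
    exact ⟨d i * r * (d j)⁻¹, by simp only [hd _ _ _ hij, map_mul]⟩
  · rintro h ⟨d, -, hd⟩ r
    exact ⟨d j * r * (d i)⁻¹, by simp only [hd _ _ _ hij.symm, map_mul]⟩
  · intro u
    simp only [w, ← map_inv, map_neg]
    rfl
  · intro u s
    simp only [hx.w_conj hn i j hij _ i j hij, Equiv.swap_apply_left, Equiv.swap_apply_right]
    congr 1
    simp [wc, hij.symm, ← map_inv]
  · intro u s
    simp only [hx.w_conj hn i j hij _ j i hij.symm, Equiv.swap_apply_left, Equiv.swap_apply_right]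
    congr 1
    simp [wc, hij.symm, ← map_inv]
  · intro u v
    exact hx.ww_mem hn f i j hij u v

/-- the covering set -/
def Y (x : Fin n → Fin n → S → G) (φ : G →* Matrix (Fin n) (Fin n) S) (f : R →+* S) : Set G :=
  {g | ∃ a ∈ U x f (· < ·), ∃ b ∈ U x f (fun i j => j < i), ∃ h ∈ T x φ f,
    ∃ c ∈ U x f (· < ·), g = a * b * h * c}

theorem Sys.Y_neg [IsLocalRing R] (hx : Sys x φ) (hn : 3 ≤ n) (f : R →+* S) (i j : Fin n)
    (hij : i.val + 1 = j.val) (r : R) {g : G} (hg : g ∈ Y x φ f) : x j i (f r) * g ∈ Y x φ f := by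
  obtain ⟨a, ha, b, hb, h, hh, c, hc, rfl⟩ := hg
  have hlt : i < j := by rw [Fin.lt_def]; omega
  have hne := hlt.ne
  let ρ : Fin n → Fin n → Prop := fun k l => k < l ∧ ¬ (k = i ∧ l = j)
  let ρ' : Fin n → Fin n → Prop := fun k l => l < k ∧ ¬ (k = j ∧ l = i)
  have n1 : Nrm ρ i j := by
    refine ⟨hne, ?_, ?_, ?_, ?_⟩ <;>
      simp only [ρ, Fin.lt_def, Fin.ext_iff, ne_eq, and_true, true_and, not_true_eq_false,
        and_false, not_false_eq_true] <;> omega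
  have n2 : Nrm ρ j i := by
    refine ⟨hne.symm, ?_, ?_, ?_, ?_⟩ <;>
      simp only [ρ, Fin.lt_def, Fin.ext_iff, ne_eq, and_true, true_and, not_true_eq_false,
        and_false, not_false_eq_true] <;> omega
  have n3 : Nrm ρ' i j := by
    refine ⟨hne, ?_, ?_, ?_, ?_⟩ <;>
      simp only [ρ', Fin.lt_def, Fin.ext_iff, ne_eq, and_true, true_and, not_true_eq_false,
        and_false, not_false_eq_true] <;> omega
  have n4 : Nrm ρ' j i := by
    refine ⟨hne.symm, ?_, ?_, ?_, ?_⟩ <;>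
      simp only [ρ', Fin.lt_def, Fin.ext_iff, ne_eq, and_true, true_and, not_true_eq_false,
        and_false, not_false_eq_true] <;> omega
  have m1 : U x f ρ ≤ U x f (· < ·) := U_mono f fun k l h => h.1
  have m2 : U x f ρ' ≤ U x f (fun i j => j < i) := U_mono f fun k l h => h.1
  obtain ⟨s, a', ha', rfl⟩ := hx.decomp' f n1 (fun k l h => by simp only [ρ]; tauto) ha
  obtain ⟨t, b', hb', rfl⟩ := hx.decomp f n4 (fun k l h => by simp only [ρ']; tauto) hb
  obtain ⟨p, q, v, k, hk, e⟩ := hx.rank1 hn f i j hne r s t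
  have g1 := m1 (hx.x_norm f n2 r ha')
  have g2 := T_norm f (fun i j (h : j < i) => h.ne') hk (m2 (hx.x_norm f n3 v hb'))
  have g3 := T_norm f (fun i j (h : i < j) => h.ne) (Subgroup.inv_mem _ hh)
    (U_gen (x := x) f (ρ := (· < ·)) hlt v)
  refine ⟨_, Subgroup.mul_mem _ g1 (U_gen f hlt p), _,
    Subgroup.mul_mem _ (U_gen f (ρ := fun i j => j < i) hlt q) g2, k * h,
    Subgroup.mul_mem _ hk hh, _, Subgroup.mul_mem _ g3 hc, ?_⟩
  calc _ = (x j i (f r) * a' * (x j i (f r))⁻¹) * (x j i (f r) * x i j (f s) * x j i (f t)) *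
        b' * h * c := by group
    _ = _ := by rw [e]; group

theorem Sys.Y_all [IsLocalRing R] (hx : Sys x φ) (hn : 3 ≤ n) (f : R →+* S) {g : G}
    (hg : g ∈ U x f (fun i j => i ≠ j)) : g ∈ Y x φ f := by
  let K := U x f (fun i j => i.val + 1 = j.val ∨ j.val + 1 = i.val)
  have hK : U x f (fun i j => i ≠ j) ≤ K := by
    have up : ∀ m : ℕ, ∀ (i j : Fin n) (r : R), i.val + m + 1 = j.val → x i j (f r) ∈ K := by
      intro m
      induction m with
      | zero => intro i j r h; exact U_gen f (Or.inl (by omega)) r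
      | succ m ih =>
        intro i j r h
        let k : Fin n := ⟨i.val + m + 1, by omega⟩
        have h1 : x i k (f r) ∈ K := ih i k r rfl
        have h2 : x k j (f 1) ∈ K := U_gen f (Or.inl (by simp [k]; omega)) 1
        have := hx.comm i k j (f r) (f 1) (by rw [Ne, Fin.ext_iff]; simp [k]; omega)
          (by rw [Ne, Fin.ext_iff]; simp [k]; omega) (by rw [Ne, Fin.ext_iff]; omega)
        rw [map_one, mul_one, commutatorElement_def] at this
        rw [this]
        rw [map_one] at h2
        exact K.mul_mem (K.mul_mem (K.mul_mem h1 h2) (K.inv_mem h1)) (K.inv_mem h2)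
    have dn : ∀ m : ℕ, ∀ (i j : Fin n) (r : R), j.val + m + 1 = i.val → x i j (f r) ∈ K := by
      intro m
      induction m with
      | zero => intro i j r h; exact U_gen f (Or.inr (by omega)) r
      | succ m ih =>
        intro i j r h
        let k : Fin n := ⟨j.val + m + 1, by omega⟩
        have h1 : x k j (f 1) ∈ K := ih k j 1 rfl
        have h2 : x i k (f r) ∈ K := U_gen f (Or.inr (by simp [k]; omega)) r
        have := hx.comm i k j (f r) (f 1) (by rw [Ne, Fin.ext_iff]; simp [k]; omega)
          (by rw [Ne, Fin.ext_iff]; simp [k]; omega) (by rw [Ne, Fin.ext_iff]; omega)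
        rw [map_one, mul_one, commutatorElement_def] at this
        rw [this]
        rw [map_one] at h1
        exact K.mul_mem (K.mul_mem (K.mul_mem h2 h1) (K.inv_mem h2)) (K.inv_mem h1)
    conv_lhs => unfold U
    rw [Subgroup.closure_le]
    rintro g ⟨i, j, r, hij, rfl⟩
    rcases lt_or_gt_of_ne hij with h | h
    · rw [Fin.lt_def] at h
      exact up (j.val - i.val - 1) i j r (by omega)
    · rw [Fin.lt_def] at h
      exact dn (i.val - j.val - 1) i j r (by omega)
  have key : ∀ (i j : Fin n) (r : R), (i.val + 1 = j.val ∨ j.val + 1 = i.val) → ∀ y ∈ Y x φ f,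
      x i j (f r) * y ∈ Y x φ f := by
    rintro i j r (h | h) y hy
    · obtain ⟨a, ha, b, hb, h', hh, c, hc, rfl⟩ := hy
      exact ⟨_, Subgroup.mul_mem _ (U_gen f (ρ := (· < ·))
        (show i < j by rw [Fin.lt_def]; omega) r) ha, b, hb, h', hh, c, hc, by group⟩
    · exact hx.Y_neg hn f j i h r hy
  have hg' := hK hg
  simp only [K] at hg'
  unfold U at hg'
  clear hg
  induction hg' using Subgroup.closure_induction_left with
  | one => exact ⟨1, Subgroup.one_mem _, 1, Subgroup.one_mem _, 1, Subgroup.one_mem _, 1,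
      Subgroup.one_mem _, by simp⟩
  | mul_left a ha y hy ih =>
    obtain ⟨k, l, s, hkl, rfl⟩ := ha
    exact key _ _ _ hkl _ ih
  | inv_mul_cancel a ha y hy ih =>
    obtain ⟨k, l, s, hkl, rfl⟩ := ha
    rw [← hx.neg, ← map_neg]
    exact key _ _ _ hkl _ ih

theorem Sys.central [IsLocalRing R] (hx : Sys x φ) (hn : 3 ≤ n) (f : R →+* S)
    (gen : Subgroup.closure {g | ∃ i j s, i ≠ j ∧ g = x i j s} = ⊤) {g : G}
    (hg : g ∈ U x f (fun i j => i ≠ j)) (h1 : φ g = 1) : g ∈ Subgroup.center G := by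
  obtain ⟨a, ha, b, hb, h, hh, c, hc, rfl⟩ := hx.Y_all hn f hg
  have e : φ (b * h * (c * a)) = 1 := by
    have : b * h * (c * a) = a⁻¹ * (a * b * h * c) * a := by group
    rw [this, map_mul, map_mul, h1, mul_one, ← map_mul]; simp
  have hcell := hx.cell f hb hh (Subgroup.mul_mem _ hc ha) e
  have hz : b * h * (c * a) ∈ Subgroup.center G := by
    rw [← Subgroup.centralizer_univ, ← Subgroup.coe_top, ← gen, Subgroup.centralizer_closure,
      Subgroup.mem_centralizer_iff]
    rintro y ⟨k, l, s, hkl, rfl⟩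
    have := hcell k l s hkl
    rw [mul_inv_eq_iff_eq_mul] at this
    exact this.symm
  have : a * b * h * c = b * h * (c * a) := by
    have h2 := Subgroup.mem_center_iff.1 hz a
    calc a * b * h * c = a * (b * h * (c * a)) * a⁻¹ := by group
      _ = _ := by rw [h2]; group
  rw [this]; exact hz

/-! The concrete Steinberg group -/

theorem stx_add (i j : Fin n) (hij : i ≠ j) (r s : R) :
    stx n R i j hij (r + s) = stx n R i j hij r * stx n R i j hij s := by
  have := PresentedGroup.one_of_mem (rels := {w | StRels n R w}) (StRels.add i j hij r s)
  rw [map_mul, map_mul, map_inv, mul_inv_eq_one] at this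
  exact this.symm

theorem stx_c0 (i j h k : Fin n) (hij : i ≠ j) (hhk : h ≠ k) (hjh : j ≠ h) (hik : i ≠ k) (r s : R) :
    ⁅stx n R i j hij r, stx n R h k hhk s⁆ = 1 := by
  have := PresentedGroup.one_of_mem (rels := {w | StRels n R w})
    (StRels.commZero i j h k hij hhk hjh hik r s)
  rw [map_commutatorElement] at this
  exact this

theorem stx_c1 (i j k : Fin n) (hij : i ≠ j) (hjk : j ≠ k) (hik : i ≠ k) (r s : R) :
    ⁅stx n R i j hij r, stx n R j k hjk s⁆ = stx n R i k hik (r * s) := by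
  have := PresentedGroup.one_of_mem (rels := {w | StRels n R w})
    (StRels.commAdd i j k hij hjk hik r s)
  rw [map_mul, map_commutatorElement, map_inv, mul_inv_eq_one] at this
  exact this

theorem exists_lift {H : Type} [Group H] (y : ∀ i j : Fin n, i ≠ j → R → H)
    (h0 : ∀ i j hij r s, y i j hij (r + s) = y i j hij r * y i j hij s)
    (h1 : ∀ i j h k hij hhk r s, j ≠ h → i ≠ k → ⁅y i j hij r, y h k hhk s⁆ = 1)
    (h2 : ∀ i j k hij hjk hik r s, ⁅y i j hij r, y j k hjk s⁆ = y i k hik (r * s)) :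
    ∃ F : SteinbergGroup n R →* H, ∀ i j hij r, F (stx n R i j hij r) = y i j hij r := by
  have key : ∀ w ∈ {w | StRels n R w},
      FreeGroup.lift (fun p : StGen n R => y p.1.1.1 p.1.1.2 p.1.2 p.2) w = 1 := by
    rintro w (⟨i, j, hij, r, s⟩ | ⟨i, j, h, k, hij, hhk, hjh, hik, r, s⟩ |
      ⟨i, j, k, hij, hjk, hik, r, s⟩)
    · rw [map_mul, map_mul, map_inv, mul_inv_eq_one]
      simp [h0]
    · rw [map_commutatorElement]
      simpa using h1 i j h k hij hhk r s hjh hik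
    · rw [map_mul, map_commutatorElement, map_inv, mul_inv_eq_one]
      simpa using h2 i j k hij hjk hik r s
  exact ⟨PresentedGroup.toGroup key, fun i j hij r => PresentedGroup.toGroup.of key⟩

theorem exists_map (n : ℕ) (f : R →+* S) : ∃ F : SteinbergGroup n R →* SteinbergGroup n S,
    ∀ i j hij r, F (stx n R i j hij r) = stx n S i j hij (f r) := by
  apply exists_lift (fun i j hij r => stx n S i j hij (f r))
  · intros; rw [map_add, stx_add]
  · intros; apply stx_c0 <;> assumption
  · intros; rw [map_mul, stx_c1]

theorem exists_phi (n : ℕ) (S : Type) [CommRing S] :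
    ∃ F : SteinbergGroup n S →* Matrix.GeneralLinearGroup (Fin n) S,
    ∀ i j hij r, (F (stx n S i j hij r) : Matrix (Fin n) (Fin n) S) = 1 + Matrix.single i j r := by
  have hm : ∀ (i j : Fin n) (hij : i ≠ j) (r s : S),
      (1 + Matrix.single i j r) * (1 + Matrix.single i j s) = 1 + Matrix.single i j (r + s) := by
    intro i j hij r s
    simp [mul_add, add_mul, Matrix.single_mul_single_of_ne, hij.symm, Matrix.single_add]
    abel
  let y : ∀ i j : Fin n, i ≠ j → S → Matrix.GeneralLinearGroup (Fin n) S := fun i j hij r =>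
    ⟨1 + Matrix.single i j r, 1 + Matrix.single i j (-r), by rw [hm _ _ hij]; simp,
      by rw [hm _ _ hij]; simp⟩
  have hy : ∀ i j hij r, (y i j hij r : Matrix (Fin n) (Fin n) S) = 1 + Matrix.single i j r :=
    fun _ _ _ _ => rfl
  obtain ⟨F, hF⟩ := exists_lift y
    (by
      intro i j hij r s
      ext1
      simp only [Units.val_mul, hy, hm _ _ hij])
    (by
      intro i j h k hij hhk r s hjh hik
      rw [commutatorElement_eq_one_iff_mul_comm]
      ext1
      simp only [Units.val_mul, hy]
      simp [mul_add, add_mul, Matrix.single_mul_single_of_ne, hjh, hik.symm]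
      abel)
    (by
      intro i j k hij hjk hik r s
      rw [commutatorElement_def, mul_inv_eq_iff_eq_mul, mul_inv_eq_iff_eq_mul]
      ext1
      simp only [Units.val_mul, hy]
      simp [mul_add, add_mul, Matrix.single_mul_single_of_ne, hij.symm, hjk.symm, hik.symm]
      abel)
  exact ⟨F, fun i j hij r => by rw [hF]⟩

theorem st_gen (n : ℕ) (R : Type) [CommRing R] :
    Subgroup.closure {g | ∃ i j hij r, g = stx n R i j hij r} = ⊤ := by
  rw [eq_top_iff, ← PresentedGroup.closure_range_of, Subgroup.closure_le]
  rintro _ ⟨⟨⟨⟨i, j⟩, hij⟩, r⟩, rfl⟩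
  exact Subgroup.subset_closure ⟨i, j, hij, r, rfl⟩

theorem st_ext {H : Type} [Monoid H] {F F' : SteinbergGroup n R →* H}
    (h : ∀ i j hij r, F (stx n R i j hij r) = F' (stx n R i j hij r)) : F = F' := by
  apply MonoidHom.eq_of_eqOn_dense (st_gen n R)
  rintro _ ⟨i, j, hij, r, rfl⟩
  exact h _ _ _ _

def xx (n : ℕ) (S : Type) [CommRing S] (i j : Fin n) (s : S) : SteinbergGroup n S :=
  if h : i ≠ j then stx n S i j h s else 1

theorem xx_of (S : Type) [CommRing S] {i j : Fin n} (h : i ≠ j) (s : S) :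
    xx n S i j s = stx n S i j h s := by simp [xx, h]

theorem xx_self (S : Type) [CommRing S] (i : Fin n) (s : S) :
    xx n S i i s = 1 := by simp [xx]

theorem xx_sys (S : Type) [CommRing S]
    (F : SteinbergGroup n S →* Matrix.GeneralLinearGroup (Fin n) S)
    (hF : ∀ i j hij r, (F (stx n S i j hij r) : Matrix (Fin n) (Fin n) S) =
      1 + Matrix.single i j r) :
    Sys (xx n S) ((Units.coeHom _).comp F) where
  add i j r s := by
    by_cases h : i = j
    · subst h; simp [xx_self]
    · rw [xx_of S h, xx_of S h, xx_of S h, stx_add]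
  c0 i j h k r s h1 h2 := by
    by_cases hij : i = j
    · subst hij; simp [xx_self]
    by_cases hhk : h = k
    · subst hhk; simp [xx_self]
    rw [xx_of S hij, xx_of S hhk, mul_inv_eq_iff_eq_mul, ← commutatorElement_eq_one_iff_mul_comm]
    exact stx_c0 _ _ _ _ _ _ h1 h2 _ _
  c1 i j k r s hij hjk hik := by
    rw [xx_of S hij, xx_of S hjk, xx_of S hik, ← stx_c1 i j k hij hjk hik, commutatorElement_def]
    group
  ph i j r hij := by
    rw [xx_of S hij]; exact hF _ _ _ _

theorem local_central (hn : 3 ≤ n) [IsLocalRing R] (f : R →+* S)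
    (F : SteinbergGroup n R →* SteinbergGroup n S)
    (hF : ∀ i j hij r, F (stx n R i j hij r) = stx n S i j hij (f r))
    (φ : SteinbergGroup n S →* Matrix.GeneralLinearGroup (Fin n) S)
    (hφ : ∀ i j hij r, (φ (stx n S i j hij r) : Matrix (Fin n) (Fin n) S) =
      1 + Matrix.single i j r) (g : SteinbergGroup n R) (hg : φ (F g) = 1) :
    F g ∈ Subgroup.center (SteinbergGroup n S) := by
  refine (xx_sys S φ hφ).central hn f ?_ ?_ ?_
  · rw [eq_top_iff, ← st_gen, Subgroup.closure_le]
    rintro _ ⟨i, j, hij, r, rfl⟩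
    exact Subgroup.subset_closure ⟨i, j, r, hij, (xx_of S hij r).symm⟩
  · have : (⊤ : Subgroup (SteinbergGroup n R)) ≤ (U (xx n S) f (fun i j => i ≠ j)).comap F := by
      rw [← st_gen, Subgroup.closure_le]
      rintro _ ⟨i, j, hij, r, rfl⟩
      simp only [Subgroup.coe_comap, Set.mem_preimage, hF, ← xx_of S hij]
      exact U_gen f (ρ := fun i j => i ≠ j) hij r
    exact this (Subgroup.mem_top g)
  · simp [hg]

end StP

open Polynomial in
theorem stmt4 (n : ℕ) (hn : 3 ≤ n) (h : LocalGlobalPrinciple n)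
    (R : Type) [CommRing R]
    (φ : SteinbergGroup n R →* Matrix.GeneralLinearGroup (Fin n) R)
    (hφ : ∀ (i j : Fin n) (hij : i ≠ j) (r : R),
      (φ (stx n R i j hij r) : Matrix (Fin n) (Fin n) R) = 1 + Matrix.single i j r) :
    φ.ker ≤ Subgroup.center (SteinbergGroup n R) := by
  intro g hg
  rw [MonoidHom.mem_ker] at hg
  rw [← Subgroup.centralizer_univ, ← Subgroup.coe_top, ← StP.st_gen, Subgroup.centralizer_closure,
    Subgroup.mem_centralizer_iff]
  rintro _ ⟨i, j, hij, r, rfl⟩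
  obtain ⟨cR, hcR⟩ := StP.exists_map n (C : R →+* R[X])
  obtain ⟨e1, he1⟩ := StP.exists_map n (evalRingHom (1 : R))
  obtain ⟨e0, he0⟩ := StP.exists_map n (evalRingHom (0 : R))
  have q1 : e1.comp cR = MonoidHom.id _ := StP.st_ext (by intros; simp [hcR, he1])
  have q0 : e0.comp cR = MonoidHom.id _ := StP.st_ext (by intros; simp [hcR, he0])
  have q1' : e1 (cR g) = g := DFunLike.congr_fun q1 g
  have z : stx n R i j hij 0 = 1 := by
    have := StP.stx_add i j hij (0 : R) 0
    simpa using this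
  have main : ⁅stx n R[X] i j hij (C r * X), cR g⁆ = 1 := by
    refine (h R _ e0 (fun i j hij p => he0 i j hij p) ?_).2 ?_
    · rw [map_commutatorElement, he0]
      simp [z]
    · intro M _ lM hlM
      rw [map_commutatorElement]
      let RM := Localization.AtPrime M
      obtain ⟨l, hl⟩ := StP.exists_map n (algebraMap R RM)
      obtain ⟨cM, hcM⟩ := StP.exists_map n (C : RM →+* RM[X])
      obtain ⟨ψ, hψ⟩ := StP.exists_phi n RM[X]
      have q : lM.comp cR = cM.comp l := StP.st_ext (by intros; simp [hcR, hlM, hl, hcM, RM])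
      have q' : lM (cR g) = cM (l g) := DFunLike.congr_fun q g
      have q2 : ψ.comp (cM.comp l) =
          (Matrix.GeneralLinearGroup.map ((C : RM →+* RM[X]).comp (algebraMap R RM))).comp φ := by
        apply StP.st_ext
        intro i j hij r
        ext1
        simp only [MonoidHom.comp_apply, hl, hcM, hψ]
        show _ = ((φ (stx n R i j hij r) : Matrix (Fin n) (Fin n) R)).map _
        rw [hφ]
        ext a b
        simp only [Matrix.map_apply, Matrix.add_apply, Matrix.one_apply, Matrix.single_apply]
        split_ifs <;> simp
      have q3 : ψ (cM (l g)) = 1 := by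
        have := DFunLike.congr_fun q2 g
        simpa [hg] using this
      have := StP.local_central hn (C : RM →+* RM[X]) cM hcM ψ hψ (l g) q3
      rw [q', commutatorElement_eq_one_iff_mul_comm]
      exact Subgroup.mem_center_iff.1 this _
  have := congrArg e1 main
  rw [map_commutatorElement, q1', he1, map_one, commutatorElement_eq_one_iff_mul_comm] at this
  simpa using this
end
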